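/- arXiv:1405.1000 — 2 statements merged into one kernel-verified Lean document; each statement's English description precedes it below -/
import Mathlib

section
/- Let f ∈ Homeo₀(𝔸) with a lift f̃ whose rotation set is the singleton {p/q}, where p, q are integers with either (q > 0, 0 < p < q, and p, q coprime) or (p = 0 and q = 1). Then for all integers n > 0 and N > 0 there exists a family (γ'_i)_{i ∈ ℤ/nqℤ} of pairwise disjoint simple curves joining the two boundary components of 𝔸 such that for every index i and every integer 0 ≤ k ≤ N: (1) if n ≠ 1 or q ≠ 1, the curve f^k(γ'_i) lies strictly between the curves γ'_{i+knp−1} and γ'_{i+knp+1}; (2) if n = q = 1, any lift of the curve f^k(γ'_1) to the strip ℝ × [0,1] meets at most one lift of the curve γ'_1. -/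
open Filter Topology Set

/-- `f` is isotopic to the identity through homeomorphisms. -/
def IsotopicToId {X : Type*} [TopologicalSpace X] (f : X ≃ₜ X) : Prop :=
  ∃ F : unitInterval → X ≃ₜ X,
    Continuous (fun p : unitInterval × X => F p.1 p.2) ∧
    F 0 = Homeomorph.refl X ∧ F 1 = f

/-- The closed annulus `𝔸 = (ℝ/ℤ) × [0,1]`. -/
noncomputable abbrev Annulus : Type := AddCircle (1 : ℝ) × unitInterval

/-- The strip `ℝ × [0,1]`, universal cover of the annulus. -/
abbrev Strip : Type := ℝ × unitInterval

/-- The covering map `π : ℝ × [0,1] → 𝔸`. -/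
noncomputable def pA : Strip → Annulus := fun x => ((x.1 : AddCircle (1 : ℝ)), x.2)

/-- `ft` is a lift of `f` to the strip. -/
def IsLiftA (f : Annulus ≃ₜ Annulus) (ft : Strip ≃ₜ Strip) : Prop :=
  pA ∘ ft = f ∘ pA

/-- The rotation set of a homeomorphism `ft` of the strip: the set of limits of sequences
`(p₁(ftⁿᵏ(x̃ₖ)) − p₁(x̃ₖ))/nₖ` with `nₖ → +∞`. -/
def rotSet (ft : Strip ≃ₜ Strip) : Set ℝ :=
  {r | ∃ (nk : ℕ → ℕ) (xk : ℕ → Strip), Tendsto nk atTop atTop ∧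
    Tendsto (fun k => (((⇑ft)^[nk k] (xk k)).1 - (xk k).1) / nk k) atTop (nhds r)}

/-- A simple curve in the annulus joining the two boundary components. -/
def JoinsBoundaryA (γ : unitInterval → Annulus) : Prop :=
  Continuous γ ∧ Function.Injective γ ∧
    ((γ 0).2 : ℝ) = 0 ∧ ((γ 1).2 : ℝ) = 1 ∧
    ∀ t : unitInterval, t ≠ 0 → t ≠ 1 → ((γ t).2 : ℝ) ∈ Set.Ioo (0 : ℝ) 1

/-- A simple curve in the strip joining the two boundary components. -/
def JoinsBoundaryS (γ : unitInterval → Strip) : Prop :=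
  Continuous γ ∧ Function.Injective γ ∧
    ((γ 0).2 : ℝ) = 0 ∧ ((γ 1).2 : ℝ) = 1 ∧
    ∀ t : unitInterval, t ≠ 0 → t ≠ 1 → ((γ t).2 : ℝ) ∈ Set.Ioo (0 : ℝ) 1

/-- `γt` is a (continuous) lift to the strip of the curve `γ` in the annulus. -/
def IsCurveLift (γ : unitInterval → Annulus) (γt : unitInterval → Strip) : Prop :=
  Continuous γt ∧ pA ∘ γt = γ

/-- The point `x` lies strictly on the right of the curve `γt` of the strip: it belongs
to the connected component of the complement of `γt` containing all the far-right points
(for a curve oriented from the bottom boundary to the top boundary of the strip, the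
right-hand side is towards `x₁ = +∞`). -/
def OnRightS (γt : unitInterval → Strip) (x : Strip) : Prop :=
  ∃ q : Strip, (∀ t, (γt t).1 < q.1) ∧ x ∈ connectedComponentIn (Set.range γt)ᶜ q

/-- The point `x` lies strictly on the left of the curve `γt` of the strip. -/
def OnLeftS (γt : unitInterval → Strip) (x : Strip) : Prop :=
  ∃ q : Strip, (∀ t, q.1 < (γt t).1) ∧ x ∈ connectedComponentIn (Set.range γt)ᶜ q

/-- The set `A` lies strictly on the right of the curve `γt` of the strip. -/
def StrictlyRightS (γt : unitInterval → Strip) (A : Set Strip) : Prop :=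
  ∀ x ∈ A, OnRightS γt x

/-- The set `A` lies strictly on the left of the curve `γt` of the strip. -/
def StrictlyLeftS (γt : unitInterval → Strip) (A : Set Strip) : Prop :=
  ∀ x ∈ A, OnLeftS γt x

/-- The curve `γ₂` lies strictly between the curves `γ₁` and `γ₃` (three pairwise
disjoint simple curves joining the two boundary components of the annulus): there are
lifts `γt₁`, `γt₂` of `γ₁`, `γ₂` such that `γt₂` lies strictly on the right of `γt₁`
and, for every lift `γt₃` of `γ₃` lying strictly on the right of `γt₁`, the curve `γt₂`
lies strictly on the left of `γt₃`. -/
def StrictlyBetween (γ₁ γ₂ γ₃ : unitInterval → Annulus) : Prop :=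
  ∃ γt₁ γt₂ : unitInterval → Strip, IsCurveLift γ₁ γt₁ ∧ IsCurveLift γ₂ γt₂ ∧
    StrictlyRightS γt₁ (Set.range γt₂) ∧
    ∀ γt₃ : unitInterval → Strip, IsCurveLift γ₃ γt₃ →
      StrictlyRightS γt₁ (Set.range γt₃) → StrictlyLeftS γt₃ (Set.range γt₂)

/-!
The Birkhoff average of the first coordinate over a long orbit segment is a function on the strip
that commutes with integer translations and that the lift increases by `p / q` up to a small error.
Replacing its value at a point by the minimax over the connected sets joining that point to the left
end of the strip, and then symmetrically at the right end, keeps both properties and makes all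
sublevel and superlevel sets connected. Since the strip is unicoherent, the bands between two levels
are then connected, and they contain arcs joining the two boundary lines. One such arc near each
level `j / (n * q)`, chosen equivariantly, gives the family of curves: the first `N` iterates move
levels by `k * p / q` up to a small error, so they keep each curve between the neighbours of the
curve it lands on.
-/

section AddCircleLift

variable {X : Type*} [TopologicalSpace X]

lemma exists_intCast_eq_sub_of_coe_eq {x y : ℝ} (h : (x : AddCircle (1 : ℝ)) = y) :
    ∃ n : ℤ, x - y = n := by
  have hxy : ((x - y : ℝ) : AddCircle (1 : ℝ)) = 0 := by rw [AddCircle.coe_sub, h, sub_self]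
  obtain ⟨n, hn⟩ := (AddCircle.coe_eq_zero_iff _).1 hxy
  exact ⟨n, by simp [← hn]⟩

lemma sub_eq_sub_of_addCircle_coe_eq {S : Set X} (hS : IsPreconnected S) {F g : X → ℝ}
    (hF : ContinuousOn F S) (hg : ContinuousOn g S)
    (hFg : ∀ x ∈ S, (F x : AddCircle (1 : ℝ)) = g x) {x y : X} (hx : x ∈ S) (hy : y ∈ S) :
    F x - g x = F y - g y := by
  refine hS.constant_of_mapsTo (T := range (Int.cast : ℤ → ℝ))
    Int.isClosedEmbedding_coe_real.isEmbedding.isDiscrete_range (hF.sub hg) (fun z hz ↦ ?_) hx hy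
  obtain ⟨n, hn⟩ := exists_intCast_eq_sub_of_coe_eq (hFg z hz)
  exact ⟨n, hn.symm⟩

lemma exists_continuous_lift_addCircle [SimplyConnectedSpace X] [LocallyPathConnectedSpace X]
    {φ : X → AddCircle (1 : ℝ)} (hφ : Continuous φ) :
    ∃ F : X → ℝ, Continuous F ∧ ∀ x, (F x : AddCircle (1 : ℝ)) = φ x := by
  obtain ⟨x₀⟩ : Nonempty X := inferInstance
  obtain ⟨e, he⟩ := QuotientAddGroup.mk_surjective (φ x₀)
  obtain ⟨F, ⟨-, hF⟩, -⟩ :=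
    (AddCircle.isCoveringMap_coe (1 : ℝ)).existsUnique_continuousMap_lifts ⟨φ, hφ⟩ x₀ e he
  exact ⟨F, F.continuous, congr_fun hF⟩

end AddCircleLift

section Unicoherence

variable {X : Type*} [TopologicalSpace X]

lemma frontier_inter_inter_subset_compl {O A B : Set X} (hO : IsOpen O) (hA : IsOpen A)
    (hB : IsOpen B) (hAB : O ⊆ A ∪ B) (hdisj : Disjoint (O ∩ A) B) :
    frontier (O ∩ A) ⊆ Oᶜ := by
  intro x hx hxO
  rw [(hO.inter hA).frontier_eq] at hx
  have hxB : x ∈ B := (hAB hxO).resolve_left fun hxA ↦ hx.2 ⟨hxO, hxA⟩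
  exact (hdisj.closure_left hB).le_bot ⟨hx.1, hxB⟩

-- Gluing `h` on `U ∩ V ∩ A` to a constant elsewhere gives a circle-valued map whose real lift
-- would have to jump by `0` along `U` and by `1` along `V` between `A` and `B`.
theorem isPreconnected_inter_of_union_eq_univ [SimplyConnectedSpace X]
    [LocallyPathConnectedSpace X] [NormalSpace X] {U V : Set X} (hU : IsOpen U) (hV : IsOpen V)
    (hUc : IsPreconnected U) (hVc : IsPreconnected V) (hUV : U ∪ V = univ) :
    IsPreconnected (U ∩ V) := by
  classical
  rintro A B hA hB hAB ⟨a, haUV, haA⟩ ⟨b, hbUV, hbB⟩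
  by_contra hne
  have hdisj : Disjoint (U ∩ V ∩ A) B := by
    rw [Set.disjoint_iff_inter_eq_empty, ← not_nonempty_iff_eq_empty, inter_assoc]
    exact hne
  obtain ⟨h, h0, h1, -⟩ := exists_continuous_zero_one_of_isClosed
    hV.isClosed_compl hU.isClosed_compl (by
      rw [disjoint_compl_left_iff_subset, compl_subset_iff_union]; exact hUV)
  have hfr := frontier_inter_inter_subset_compl (hU.inter hV) hA hB hAB hdisj
  have haO : a ∈ U ∩ V ∩ A := ⟨haUV, haA⟩
  have hbO : b ∉ U ∩ V ∩ A := fun hb ↦ hdisj.le_bot ⟨hb, hbB⟩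
  generalize U ∩ V ∩ A = O at hfr haO hbO
  have hφ : Continuous fun x ↦ if x ∈ O then (h x : AddCircle (1 : ℝ)) else 0 := by
    refine continuous_if (fun x hx ↦ ?_) (by fun_prop) continuousOn_const
    by_cases hxU : x ∈ U
    · simp [h0 fun hxV ↦ hfr hx ⟨hxU, hxV⟩]
    · simp [h1 hxU]
  obtain ⟨F, hF, hFφ⟩ := exists_continuous_lift_addCircle hφ
  have jump {S : Set X} (hS : IsPreconnected S) (ha : a ∈ S) (hb : b ∈ S) {c : ℝ}
      (hc : (c : AddCircle (1 : ℝ)) = 0) (hfrS : ∀ x ∈ S ∩ frontier O, h x = c) :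
      F a - h a = F b - c := by
    have := sub_eq_sub_of_addCircle_coe_eq (g := fun x ↦ if x ∈ O then h x else c) hS
      hF.continuousOn (.if hfrS (by fun_prop) continuousOn_const)
      (fun x _ ↦ by rw [hFφ, apply_ite ((↑) : ℝ → AddCircle (1 : ℝ)), hc]) ha hb
    simpa only [if_pos haO, if_neg hbO] using this
  have hU_jump := jump hUc haUV.1 hbUV.1 (c := 0) (by simp)
    fun x hx ↦ h0 fun hxV ↦ hfr hx.2 ⟨hx.1, hxV⟩
  have hV_jump := jump hVc haUV.2 hbUV.2 (AddCircle.coe_period 1)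
    fun x hx ↦ h1 fun hxU ↦ hfr hx.2 ⟨hxU, hx.1⟩
  linarith

end Unicoherence

instance : LocallyPathConnectedSpace unitInterval :=
  (convex_Icc (0 : ℝ) 1).locallyPathConnectedSpace

instance : ContractibleSpace unitInterval :=
  (convex_Icc (0 : ℝ) 1).contractibleSpace ⟨0, by simp⟩

section Crossing

open Real

lemma le_add_pi_of_sin_sub_nonneg {X : Type*} [TopologicalSpace X] [PreconnectedSpace X]
    {g : X → ℝ} (hg : Continuous g) {a : ℝ} (hsin : ∀ x, 0 ≤ sin (g x - a)) {x₀ : X}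
    (h₀ : g x₀ ≤ a + π) (x : X) : g x ≤ a + π := by
  by_contra! hx
  obtain ⟨y, hy⟩ := intermediate_value_univ x₀ x hg
    (show min (g x) (a + 3 * π / 2) ∈ Icc (g x₀) (g x) from
      ⟨le_min (by linarith) (by linarith [pi_pos]), min_le_left _ _⟩)
  have hgt : a + π < g y := hy ▸ lt_min hx (by linarith [pi_pos])
  have hlt : g y ≤ a + 3 * π / 2 := hy ▸ min_le_right _ _
  have hneg : 0 < sin (g y - a - π) :=
    sin_pos_of_pos_of_lt_pi (by linarith) (by linarith [pi_pos])
  rw [sin_sub_pi] at hneg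
  linarith [hsin y]

lemma mem_Icc_of_sin_sub_nonneg {X : Type*} [TopologicalSpace X] [PreconnectedSpace X]
    {g : X → ℝ} (hg : Continuous g) {a : ℝ} (hsin : ∀ x, 0 ≤ sin (g x - a)) {x₀ : X}
    (h₀ : g x₀ ∈ Icc a (a + π)) (x : X) : g x ∈ Icc a (a + π) := by
  refine ⟨?_, le_add_pi_of_sin_sub_nonneg hg hsin h₀.2 x⟩
  have := le_add_pi_of_sin_sub_nonneg (g := fun x ↦ 2 * a + π - g x) (by fun_prop) (a := a)
    (fun x ↦ by convert hsin x using 1; rw [← sin_pi_sub]; ring_nf) (x₀ := x₀)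
    (by linarith [h₀.1]) x
  linarith

lemma exists_continuous_arg {X : Type*} [TopologicalSpace X] [SimplyConnectedSpace X]
    [LocallyPathConnectedSpace X] {F : X → ℂ} (hF : Continuous F) (hF₀ : ∀ x, F x ≠ 0) (x₀ : X) :
    ∃ θ : X → ℝ, Continuous θ ∧ θ x₀ = (F x₀).arg ∧
      ∀ x, ∃ r > 0, (F x).re = r * cos (θ x) ∧ (F x).im = r * sin (θ x) := by
  obtain ⟨G, ⟨hG₀, hG⟩, -⟩ := Complex.isCoveringMapOn_exp.existsUnique_continuousMap_lifts
    ⟨F, hF⟩ (a₀ := x₀) (e₀ := Complex.log (F x₀)) (Complex.exp_log (hF₀ _)) hF₀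
  have hexp (x) : F x = Complex.exp (G x) := (congr_fun hG x).symm
  refine ⟨fun x ↦ (G x).im, by fun_prop, by simp only [hG₀, Complex.log_im],
    fun x ↦ ⟨exp (G x).re, exp_pos _, ?_, ?_⟩⟩
  · rw [hexp, Complex.exp_re]
  · rw [hexp, Complex.exp_im]

-- A continuous argument `θ` of `F` would satisfy `θ (1, 1) ≤ π / 2` going around the square
-- through the bottom and right sides, but `π ≤ θ (1, 1)` through the left and top sides.
theorem exists_eq_zero_of_re_of_im_on_sides {F : unitInterval × unitInterval → ℂ}
    (hF : Continuous F) (hleft : ∀ t, (F (0, t)).re < 0) (hright : ∀ t, 0 < (F (1, t)).re)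
    (hbot : ∀ s, 0 ≤ (F (s, 0)).im) (htop : ∀ s, (F (s, 1)).im ≤ 0) : ∃ z, F z = 0 := by
  by_contra! hne
  obtain ⟨θ, hθ, hθ₀, hFθ⟩ := exists_continuous_arg hF hne (0, 0)
  choose r hr hcos hsin using hFθ
  have cos_left (t) : cos (θ (0, t)) < 0 := neg_of_mul_neg_right (hcos _ ▸ hleft t) (hr _).le
  have cos_right (t) : 0 < cos (θ (1, t)) := pos_of_mul_pos_right (hcos _ ▸ hright t) (hr _).le
  have sin_bot (s) : 0 ≤ sin (θ (s, 0)) := nonneg_of_mul_nonneg_right (hsin _ ▸ hbot s) (hr _)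
  have sin_top (s) : sin (θ (s, 1)) ≤ 0 := nonpos_of_mul_nonpos_right (hsin _ ▸ htop s) (hr _)
  have bot := mem_Icc_of_sin_sub_nonneg (g := fun s ↦ θ (s, 0)) (by fun_prop) (a := 0) (x₀ := 0)
    (fun s ↦ by rw [sub_zero]; exact sin_bot s)
    (by rw [hθ₀, zero_add]; exact ⟨Complex.arg_nonneg_iff.2 (hbot 0), Complex.arg_le_pi _⟩)
  have hθ₁₀ : θ (1, 0) ≤ π / 2 := by
    by_contra! h
    exact (cos_right 0).not_ge
      (cos_nonpos_of_pi_div_two_le_of_le h.le (by linarith [(bot 1).2, pi_pos]))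
  have right := mem_Icc_of_sin_sub_nonneg (g := fun t ↦ θ (1, t)) (by fun_prop) (a := -(π / 2))
    (fun t ↦ by rw [sub_neg_eq_add, sin_add_pi_div_two]; exact (cos_right t).le) (x₀ := 0)
    ⟨by linarith [(bot 1).1, pi_pos], by linarith⟩
  have hθ₀₀ : π / 2 ≤ θ (0, 0) := by
    by_contra! h
    exact (cos_left 0).not_ge (cos_nonneg_of_mem_Icc ⟨by linarith [(bot 0).1, pi_pos], h.le⟩)
  have left := mem_Icc_of_sin_sub_nonneg (g := fun t ↦ θ (0, t)) (by fun_prop) (a := π / 2)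
    (fun t ↦ by rw [sin_sub_pi_div_two]; linarith [cos_left t]) (x₀ := 0)
    ⟨hθ₀₀, by linarith [(bot 0).2, pi_pos]⟩
  have hθ₀₁ : π ≤ θ (0, 1) := by
    by_contra! h
    exact (sin_top 0).not_gt (sin_pos_of_pos_of_lt_pi (by linarith [(left 1).1, pi_pos]) h)
  have top := mem_Icc_of_sin_sub_nonneg (g := fun s ↦ θ (s, 1)) (by fun_prop) (a := π)
    (fun s ↦ by rw [sin_sub_pi]; linarith [sin_top s]) (x₀ := 0)
    ⟨hθ₀₁, by linarith [(left 1).2, pi_pos]⟩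
  linarith [(right 1).2, (top 1).1, pi_pos]

lemma exists_eq_of_crossing {β γ : unitInterval → Strip} (hβ : Continuous β) (hγ : Continuous γ)
    (hγ₀ : ((γ 0).2 : ℝ) = 0) (hγ₁ : ((γ 1).2 : ℝ) = 1) (hleft : ∀ t, (β 0).1 < (γ t).1)
    (hright : ∀ t, (γ t).1 < (β 1).1) : ∃ s t, β s = γ t := by
  obtain ⟨⟨s, t⟩, hst⟩ := exists_eq_zero_of_re_of_im_on_sides
    (F := fun z ↦ Complex.equivRealProdCLM.symm
      ((β z.1).1 - (γ z.2).1, ((β z.1).2 : ℝ) - ((γ z.2).2 : ℝ)))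
    (by fun_prop) (fun t ↦ by simp [hleft t]) (fun t ↦ by simp [hright t])
    (fun s ↦ by simp [hγ₀, (β s).2.2.1]) (fun s ↦ by simp [hγ₁, (β s).2.2.2])
  obtain ⟨h₁, h₂⟩ : (β s).1 - (γ t).1 = 0 ∧ ((β s).2 : ℝ) - ((γ t).2 : ℝ) = 0 := by
    simpa [Complex.ext_iff] using hst
  exact ⟨s, t, Prod.ext (sub_eq_zero.1 h₁) (Subtype.ext (sub_eq_zero.1 h₂))⟩

namespace JoinsBoundaryS

variable {γ : unitInterval → Strip}

lemma exists_mem_of_isPreconnected (hγ : JoinsBoundaryS γ) {O : Set Strip} (hO : IsOpen O)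
    (hOc : IsPreconnected O) {x y : Strip} (hx : x ∈ O) (hy : y ∈ O)
    (hleft : ∀ t, x.1 < (γ t).1) (hright : ∀ t, (γ t).1 < y.1) : ∃ t, γ t ∈ O := by
  have hpath : IsPathConnected O := hO.isConnected_iff_isPathConnected.1 ⟨⟨x, hx⟩, hOc⟩
  obtain ⟨β, hβ⟩ := hpath.joinedIn x hx y hy
  obtain ⟨hγc, -, hγ₀, hγ₁, -⟩ := hγ
  obtain ⟨s, t, hst⟩ := exists_eq_of_crossing β.continuous hγc hγ₀ hγ₁
    (fun t ↦ by simp [hleft t]) (fun t ↦ by simp [hright t])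
  exact ⟨t, hst ▸ hβ s⟩

lemma not_onRightS_of_onLeftS (hγ : JoinsBoundaryS γ) {x : Strip} (hl : OnLeftS γ x) :
    ¬ OnRightS γ x := by
  rintro ⟨r, hr, hxr⟩
  obtain ⟨l, hl, hxl⟩ := hl
  have hopen : IsOpen (range γ)ᶜ := (isCompact_range hγ.1).isClosed.isOpen_compl
  have mem_component {q : Strip} (hq : q ∉ range γ)
      (hx : x ∈ connectedComponentIn (range γ)ᶜ q) : q ∈ connectedComponentIn (range γ)ᶜ x :=
    connectedComponentIn_eq hx ▸ mem_connectedComponentIn hq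
  obtain ⟨t, ht⟩ := hγ.exists_mem_of_isPreconnected hopen.connectedComponentIn
    isPreconnected_connectedComponentIn
    (mem_component (by rintro ⟨t, rfl⟩; exact (hl t).false) hxl)
    (mem_component (by rintro ⟨t, rfl⟩; exact (hr t).false) hxr) hl hr
  exact connectedComponentIn_subset _ _ ht ⟨t, rfl⟩

end JoinsBoundaryS

end Crossing

section Arcs

/-- `g` restricts to an arc (an injective path) parametrized by `[a, b]`; the degenerate case
`a = b` is allowed. -/
structure IsArc {X : Type*} [TopologicalSpace X] (g : ℝ → X) (a b : ℝ) : Prop where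
  le : a ≤ b
  continuousOn : ContinuousOn g (Icc a b)
  injOn : InjOn g (Icc a b)

/-- The points `x` and `y` are equal or joined by an arc contained in `O`. -/
def ArcIn {X : Type*} [TopologicalSpace X] (O : Set X) (x y : X) : Prop :=
  ∃ (g : ℝ → X) (a b : ℝ), IsArc g a b ∧ MapsTo g (Icc a b) O ∧ g a = x ∧ g b = y

variable {X : Type*} [TopologicalSpace X]

namespace IsArc

variable {g g₁ g₂ : ℝ → X} {a b s : ℝ}

lemma mono (hg : IsArc g a b) {a' b' : ℝ} (ha : a ≤ a') (hab : a' ≤ b') (hb : b' ≤ b) :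
    IsArc g a' b' where
  le := hab
  continuousOn := hg.continuousOn.mono (Icc_subset_Icc ha hb)
  injOn := hg.injOn.mono (Icc_subset_Icc ha hb)

lemma comp_add_const (hg : IsArc g a b) (c : ℝ) :
    IsArc (fun t ↦ g (t + c)) (a - c) (b - c) where
  le := by linarith [hg.le]
  continuousOn := hg.continuousOn.comp (by fun_prop)
    fun t ht ↦ ⟨by linarith [ht.1], by linarith [ht.2]⟩
  injOn t ht t' ht' h := add_right_cancel <| hg.injOn
    ⟨by linarith [ht.1], by linarith [ht.2]⟩ ⟨by linarith [ht'.1], by linarith [ht'.2]⟩ h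

lemma concat (h₁ : IsArc g₁ a s) (h₂ : IsArc g₂ s b) (hs : g₁ s = g₂ s)
    (hdisj : ∀ t ∈ Ioc s b, g₂ t ∉ g₁ '' Icc a s) :
    IsArc (fun t ↦ if t ≤ s then g₁ t else g₂ t) a b := by
  set g : ℝ → X := fun t ↦ if t ≤ s then g₁ t else g₂ t
  have hg₁ : EqOn g g₁ (Icc a s) := fun t ht ↦ if_pos ht.2
  have hg₂ : EqOn g g₂ (Icc s b) := fun t ht ↦ by
    rcases ht.1.eq_or_lt with rfl | hst
    · exact (if_pos le_rfl).trans hs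
    · exact if_neg hst.not_ge
  refine ⟨h₁.le.trans h₂.le, ?_, ?_⟩
  · rw [← Icc_union_Icc_eq_Icc h₁.le h₂.le]
    exact (h₁.continuousOn.congr hg₁).union_of_isClosed (h₂.continuousOn.congr hg₂)
      isClosed_Icc isClosed_Icc
  · rw [← Icc_union_Ioc_eq_Icc h₁.le h₂.le, injOn_union
      (disjoint_left.2 fun t ht ht' ↦ ht.2.not_gt ht'.1)]
    refine ⟨h₁.injOn.congr hg₁.symm,
      (h₂.injOn.congr hg₂.symm).mono Ioc_subset_Icc_self, fun t ht t' ht' h ↦ ?_⟩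
    rw [hg₁ ht, hg₂ (Ioc_subset_Icc_self ht')] at h
    exact hdisj t' ht' ⟨t, ht, h⟩

end IsArc

namespace ArcIn

lemma mono {O O' : Set X} {x y : X} (h : ArcIn O x y) (hO : O ⊆ O') : ArcIn O' x y :=
  let ⟨g, a, b, hg, hmaps, hx, hy⟩ := h
  ⟨g, a, b, hg, hmaps.mono_right hO, hx, hy⟩

-- Leave the first arc for good at the last time the second one visits it.
lemma trans [T2Space X] {O : Set X} {x y z : X} (hxy : ArcIn O x y) (hyz : ArcIn O y z) :
    ArcIn O x z := by
  obtain ⟨g₁, a₁, b₁, hg₁, hmaps₁, rfl, rfl⟩ := hxy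
  obtain ⟨g₂, a₂, b₂, hg₂, hmaps₂, hstart, rfl⟩ := hyz
  have hK : IsClosed (g₁ '' Icc a₁ b₁) :=
    (isCompact_Icc.image_of_continuousOn hg₁.continuousOn).isClosed
  obtain ⟨t₀, ⟨ht₀, s, hs, hst₀⟩, hlast⟩ := (isCompact_Icc.of_isClosed_subset
    (hg₂.continuousOn.preimage_isClosed_of_isClosed isClosed_Icc hK)
    inter_subset_left).exists_isGreatest
    ⟨a₂, left_mem_Icc.2 hg₂.le, b₁, right_mem_Icc.2 hg₁.le, hstart.symm⟩
  have hshift : IsArc (fun t ↦ g₂ (t + (t₀ - s))) s (b₂ - (t₀ - s)) := by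
    simpa using (hg₂.mono ht₀.1 ht₀.2 le_rfl).comp_add_const (t₀ - s)
  refine ⟨_, _, _, (hg₁.mono le_rfl hs.1 hs.2).concat hshift (by simpa using hst₀) ?_,
    fun t ht ↦ ?_, if_pos hs.1, ?_⟩
  · rintro t ht ⟨r, hr, hrt⟩
    have := hlast ⟨⟨by linarith [ht.1, ht₀.1], by linarith [ht.2]⟩, r,
      Icc_subset_Icc_right hs.2 hr, hrt⟩
    linarith [ht.1]
  · dsimp only
    split_ifs with hts
    · exact hmaps₁ ⟨ht.1, hts.trans hs.2⟩
    · exact hmaps₂ ⟨by linarith [ht₀.1], by linarith [ht.2]⟩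
  · rcases hshift.le.eq_or_lt with h | h
    · simp only [← h, le_refl, if_true, hst₀]
      congr 1
      linarith
    · simp [h.not_ge]

lemma of_convex {E : Type*} [AddCommGroup E] [Module ℝ E] [TopologicalSpace E]
    [IsTopologicalAddGroup E] [ContinuousSMul ℝ E] {C : Set E} (hC : Convex ℝ C) {x y : E}
    (hx : x ∈ C) (hy : y ∈ C) : ArcIn C x y := by
  rcases eq_or_ne x y with rfl | hxy
  · exact ⟨fun _ ↦ x, 0, 0, ⟨le_rfl, continuousOn_const, by simp⟩, fun _ _ ↦ hx, rfl, rfl⟩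
  · exact ⟨AffineMap.lineMap x y, 0, 1, ⟨zero_le_one, AffineMap.lineMap_continuous.continuousOn,
      (AffineMap.lineMap_injective ℝ hxy).injOn⟩, fun t ht ↦ hC.lineMap_mem hx hy ht,
      AffineMap.lineMap_apply_zero x y, AffineMap.lineMap_apply_one x y⟩

lemma preimage {Y : Type*} [TopologicalSpace Y] {e : X → Y} (he : IsEmbedding e) {C : Set Y}
    (hC : C ⊆ range e) {x y : X} (h : ArcIn C (e x) (e y)) : ArcIn (e ⁻¹' C) x y := by
  obtain ⟨g, a, b, hg, hmaps, hx, hy⟩ := h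
  have : Nonempty X := ⟨x⟩
  choose! g' hg' using fun t (ht : t ∈ Icc a b) ↦ hC (hmaps ht)
  refine ⟨g', a, b, ⟨hg.le, he.continuousOn_iff.2 (hg.continuousOn.congr hg'),
    .of_comp (hg.injOn.congr fun t ht ↦ (hg' t ht).symm)⟩,
    fun t ht ↦ ?_, he.injective ?_, he.injective ?_⟩
  · rw [mem_preimage, hg' t ht]; exact hmaps ht
  · rw [hg' a (left_mem_Icc.2 hg.le), hx]
  · rw [hg' b (right_mem_Icc.2 hg.le), hy]

theorem of_isOpen_of_isPreconnected {E : Type*} [NormedAddCommGroup E] [NormedSpace ℝ E]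
    {e : X → E} (he : IsEmbedding e) (hconv : Convex ℝ (range e)) {O : Set X} (hO : IsOpen O)
    (hOc : IsPreconnected O) {x y : X} (hx : x ∈ O) (hy : y ∈ O) : ArcIn O x y := by
  have : T2Space X := he.t2Space
  refine hOc.induction₂' (ArcIn O) (fun x hx ↦ mem_nhdsWithin_of_mem_nhds ?_)
    (fun _ _ _ _ _ _ ↦ trans) hx hy
  have hbasis := he.nhds_eq_comap x ▸ Metric.nhds_basis_ball.comap e
  obtain ⟨r, hr, hball⟩ := hbasis.mem_iff.1 (hO.mem_nhds hx)
  filter_upwards [hbasis.mem_of_mem hr] with z hz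
  have arc {a b : X} (ha : e a ∈ Metric.ball (e x) r) (hb : e b ∈ Metric.ball (e x) r) :
      ArcIn O a b :=
    (preimage he inter_subset_right (of_convex ((convex_ball (e x) r).inter hconv)
      ⟨ha, a, rfl⟩ ⟨hb, b, rfl⟩)).mono fun z hz ↦ hball hz.1
  exact ⟨arc (Metric.mem_ball_self hr) hz, arc hz (Metric.mem_ball_self hr)⟩

end ArcIn

lemma exists_Ioo_forall_ne_of_continuousOn {φ : ℝ → ℝ} {a b : ℝ} (hab : a ≤ b)
    (hφ : ContinuousOn φ (Icc a b)) (hne : φ a ≠ φ b) :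
    ∃ s u, a ≤ s ∧ s < u ∧ u ≤ b ∧ φ s = φ a ∧ φ u = φ b ∧
      ∀ t ∈ Ioo s u, φ t ≠ φ a ∧ φ t ≠ φ b := by
  obtain ⟨s, ⟨hs, hφs⟩, hlast⟩ := (isCompact_Icc.of_isClosed_subset
    (hφ.preimage_isClosed_of_isClosed isClosed_Icc (isClosed_singleton (x := φ a)))
    inter_subset_left).exists_isGreatest ⟨a, left_mem_Icc.2 hab, rfl⟩
  obtain ⟨u, ⟨hu, hφu⟩, hfirst⟩ := (isCompact_Icc.of_isClosed_subset
    ((hφ.mono (Icc_subset_Icc_left hs.1)).preimage_isClosed_of_isClosed isClosed_Icc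
      (isClosed_singleton (x := φ b)))
    inter_subset_left).exists_isLeast ⟨b, right_mem_Icc.2 hs.2, rfl⟩
  refine ⟨s, u, hs.1, hu.1.lt_of_ne ?_, hu.2, hφs, hφu, fun t ht ↦ ⟨fun h ↦ ?_, fun h ↦ ?_⟩⟩
  · rintro rfl
    exact hne (hφs.symm.trans hφu)
  · exact ht.1.not_ge (hlast ⟨⟨hs.1.trans ht.1.le, ht.2.le.trans hu.2⟩, h⟩)
  · exact ht.2.not_ge (hfirst ⟨⟨ht.1.le, ht.2.le.trans hu.2⟩, h⟩)

lemma IsArc.joinsBoundaryS {g : ℝ → Strip} {s u : ℝ} (hg : IsArc g s u) (hsu : s < u)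
    (hs : (g s).2 = 0) (hu : (g u).2 = 1) (hne : ∀ t ∈ Ioo s u, (g t).2 ≠ 0 ∧ (g t).2 ≠ 1) :
    JoinsBoundaryS fun t ↦ g (AffineMap.lineMap s u (t : ℝ)) := by
  have hmaps (t : unitInterval) : AffineMap.lineMap s u (t : ℝ) ∈ Icc s u :=
    (convex_Icc s u).lineMap_mem (left_mem_Icc.2 hsu.le) (right_mem_Icc.2 hsu.le) t.2
  refine ⟨hg.continuousOn.comp_continuous (by fun_prop) hmaps, fun t t' h ↦ ?_,
    by simp [hs], by simp [hu], fun t ht₀ ht₁ ↦ ?_⟩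
  · exact Subtype.ext (AffineMap.lineMap_injective ℝ hsu.ne (hg.injOn (hmaps t) (hmaps t') h))
  · have ht : AffineMap.lineMap s u (t : ℝ) ∈ Ioo s u :=
      ⟨(left_lt_lineMap_iff_lt (unitInterval.pos_iff_ne_zero.2 ht₀)).2 hsu,
        (lineMap_lt_right_iff_lt (unitInterval.lt_one_iff_ne_one.2 ht₁)).2 hsu⟩
    exact ⟨unitInterval.pos_iff_ne_zero.2 (hne _ ht).1,
      unitInterval.lt_one_iff_ne_one.2 (hne _ ht).2⟩

theorem exists_joinsBoundaryS_of_isPreconnected {O : Set Strip} (hO : IsOpen O)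
    (hOc : IsPreconnected O) {x y : Strip} (hx : x ∈ O) (hy : y ∈ O) (hx₀ : x.2 = 0)
    (hy₁ : y.2 = 1) : ∃ γ : unitInterval → Strip, JoinsBoundaryS γ ∧ range γ ⊆ O := by
  obtain ⟨g, a, b, hg, hmaps, rfl, rfl⟩ := ArcIn.of_isOpen_of_isPreconnected
    (e := Prod.map (id : ℝ → ℝ) ((↑) : unitInterval → ℝ)) (.prodMap .id .subtypeVal)
    (by rw [range_prodMap, range_id, Subtype.range_coe]; exact convex_univ.prod (convex_Icc 0 1))
    hO hOc hx hy
  obtain ⟨s, u, has, hsu, hub, hs, hu, hne⟩ :=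
    exists_Ioo_forall_ne_of_continuousOn (φ := fun t ↦ ((g t).2 : ℝ)) hg.le
      (by have := hg.continuousOn; fun_prop) (by simp [hx₀, hy₁])
  simp only [hx₀, hy₁, Icc.coe_zero, Icc.coe_one, Icc.coe_eq_zero, Icc.coe_eq_one, ne_eq]
    at hs hu hne
  refine ⟨_, (hg.mono has hsu.le hub).joinsBoundaryS hsu hs hu hne, ?_⟩
  rintro _ ⟨t, rfl⟩
  exact hmaps (Icc_subset_Icc has hub ((convex_Icc s u).lineMap_mem (left_mem_Icc.2 hsu.le)
    (right_mem_Icc.2 hsu.le) t.2))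

end Arcs

section EndComponent

variable {X : Type*} [TopologicalSpace X] {l : Filter X} {A B D : Set X}

/-- The component of `A` at the end of the space described by the filter `l`: the union of the
preconnected subsets of `A` that belong to `l`. -/
def endComponent (l : Filter X) (A : Set X) : Set X :=
  {x | ∃ C ∈ l, IsPreconnected C ∧ C ⊆ A ∧ x ∈ C}

lemma endComponent_subset : endComponent l A ⊆ A := fun _ ⟨_, _, _, hCA, hx⟩ ↦ hCA hx

lemma endComponent_mono (h : A ⊆ B) : endComponent l A ⊆ endComponent l B :=
  fun _ ⟨C, hCl, hC, hCA, hx⟩ ↦ ⟨C, hCl, hC, hCA.trans h, hx⟩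

lemma subset_endComponent (hD : IsPreconnected D) (hDA : D ⊆ A) (hDl : D ∈ l) :
    D ⊆ endComponent l A := fun _ hx ↦ ⟨D, hDl, hD, hDA, hx⟩

lemma endComponent_mem (h : (endComponent l A).Nonempty) : endComponent l A ∈ l :=
  let ⟨_, _, hCl, hC, hCA, _⟩ := h
  mem_of_superset hCl (subset_endComponent hC hCA hCl)

lemma isPreconnected_endComponent [l.NeBot] : IsPreconnected (endComponent l A) := by
  refine isPreconnected_of_forall_pair ?_
  rintro x ⟨C, hCl, hC, hCA, hx⟩ y ⟨C', hCl', hC', hCA', hy⟩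
  obtain ⟨z, hz, hz'⟩ := Filter.nonempty_of_mem (inter_mem hCl hCl')
  exact ⟨C ∪ C', union_subset (subset_endComponent hC hCA hCl) (subset_endComponent hC' hCA' hCl'),
    .inl hx, .inr hy, hC.union z hz hz' hC'⟩

lemma subset_endComponent_of_inter_nonempty (hD : IsPreconnected D) (hDA : D ⊆ A)
    (hne : (D ∩ endComponent l A).Nonempty) : D ⊆ endComponent l A := by
  obtain ⟨z, hzD, C, hCl, hC, hCA, hz⟩ := hne
  exact fun x hx ↦ ⟨D ∪ C, mem_of_superset hCl subset_union_right, hD.union z hzD hz hC,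
    union_subset hDA hCA, .inl hx⟩

lemma mapsTo_endComponent {h : X → X} (hc : Continuous h) (hl : l ≤ map h l)
    (hAB : MapsTo h A B) : MapsTo h (endComponent l A) (endComponent l B) :=
  fun _ ⟨C, hCl, hC, hCA, hx⟩ ↦ ⟨h '' C, le_map_iff.1 hl C hCl, hC.image h hc.continuousOn,
    (hAB.mono_left hCA).image_subset, mem_image_of_mem h hx⟩

variable [LocallyConnectedSpace X]

lemma isOpen_endComponent (hA : IsOpen A) : IsOpen (endComponent l A) := by
  refine isOpen_iff_mem_nhds.2 fun x hx ↦ ?_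
  have hxA := endComponent_subset hx
  exact mem_of_superset (connectedComponentIn_mem_nhds (hA.mem_nhds hxA))
    (subset_endComponent_of_inter_nonempty isPreconnected_connectedComponentIn
      (connectedComponentIn_subset _ _) ⟨x, mem_connectedComponentIn hxA, hx⟩)

lemma closure_connectedComponentIn_compl_inter_nonempty [PreconnectedSpace X] (hD : IsClosed D)
    (hne : D.Nonempty) {y : X} (hy : y ∉ D) :
    (closure (connectedComponentIn Dᶜ y) ∩ D).Nonempty := by
  by_contra hempty
  have hyE : y ∈ connectedComponentIn Dᶜ y := mem_connectedComponentIn hy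
  have hclosed : closure (connectedComponentIn Dᶜ y) ⊆ connectedComponentIn Dᶜ y :=
    isPreconnected_connectedComponentIn.closure.subset_connectedComponentIn (subset_closure hyE)
      fun z hz hzD ↦ hempty ⟨z, hz, hzD⟩
  have huniv : connectedComponentIn Dᶜ y = univ := IsClopen.eq_univ
    ⟨isClosed_of_closure_subset hclosed, hD.isOpen_compl.connectedComponentIn⟩ ⟨y, hyE⟩
  obtain ⟨d, hd⟩ := hne
  exact connectedComponentIn_subset Dᶜ y (huniv ▸ mem_univ d) hd

-- Every other component of `Dᶜ` accumulates on `D`.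
lemma isPreconnected_compl_endComponent_compl [PreconnectedSpace X] (hDc : IsPreconnected D)
    (hD : IsClosed D) : IsPreconnected (endComponent l Dᶜ)ᶜ := by
  rcases D.eq_empty_or_nonempty with rfl | hne
  · have : endComponent l (∅ᶜ : Set X) = univ :=
      univ_subset_iff.1 (subset_endComponent isPreconnected_univ (by simp) univ_mem)
    rw [this, compl_univ]
    exact isPreconnected_empty
  have hDsub : D ⊆ (endComponent l Dᶜ)ᶜ := fun x hx h ↦ endComponent_subset h hx
  obtain ⟨d, hd⟩ := hne
  refine isPreconnected_of_forall d fun y hy ↦ ?_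
  by_cases hyD : y ∈ D
  · exact ⟨D, hDsub, hd, hyD, hDc⟩
  have hyE : y ∈ connectedComponentIn Dᶜ y := mem_connectedComponentIn hyD
  have hdisj : Disjoint (connectedComponentIn Dᶜ y) (endComponent l Dᶜ) :=
    disjoint_left.2 fun z hz hz' ↦ hy (subset_endComponent_of_inter_nonempty
      isPreconnected_connectedComponentIn (connectedComponentIn_subset _ _) ⟨z, hz, hz'⟩ hyE)
  obtain ⟨z, hz, hzD⟩ := closure_connectedComponentIn_compl_inter_nonempty hD ⟨d, hd⟩ hyD
  exact ⟨closure (connectedComponentIn Dᶜ y) ∪ D, union_subset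
    (hdisj.closure_left (isOpen_endComponent hD.isOpen_compl)).subset_compl_right hDsub,
    .inr hd, .inl (subset_closure hyE),
    isPreconnected_connectedComponentIn.closure.union z hz hzD hDc⟩

end EndComponent

section EndMinimax

variable {X : Type*} [TopologicalSpace X] {l : Filter X} {u : X → ℝ} {x : X} {b c : ℝ}

/-- The minimax value of `u` over the connected sets that join `x` to the end `l`. Passing from `u`
to `endMinimax l u` fills in the sublevel components which do not reach the end. The infimum is the
junk value `0` when no such set has `u` bounded above. -/
noncomputable def endMinimax (l : Filter X) (u : X → ℝ) (x : X) : ℝ :=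
  sInf {c | x ∈ endComponent l {y | u y < c}}

/-- Every point is joined to the end `l` by a connected set on which `u` is bounded above. -/
def BoundedTowards (l : Filter X) (u : X → ℝ) : Prop :=
  ∀ x, ∃ c, x ∈ endComponent l {y | u y < c}

lemma bddBelow_setOf_mem_endComponent : BddBelow {c | x ∈ endComponent l {y | u y < c}} :=
  ⟨u x, fun _ hc ↦ (endComponent_subset hc).le⟩

lemma endMinimax_le_of_mem (h : x ∈ endComponent l {y | u y < c}) : endMinimax l u x ≤ c :=
  csInf_le bddBelow_setOf_mem_endComponent h

lemma endMinimax_le_of_forall_le {C : Set X} (hCl : C ∈ l) (hC : IsPreconnected C) (hx : x ∈ C)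
    (hub : ∀ y ∈ C, u y ≤ b) : endMinimax l u x ≤ b :=
  le_of_forall_gt_imp_ge_of_dense fun _ hc ↦
    endMinimax_le_of_mem (subset_endComponent hC (fun y hy ↦ (hub y hy).trans_lt hc) hCl hx)

namespace BoundedTowards

variable (hu : BoundedTowards l u)
include hu

lemma le_endMinimax (x : X) : u x ≤ endMinimax l u x :=
  le_csInf (hu x) fun _ hc ↦ (endComponent_subset hc).le

lemma endMinimax_lt_iff : endMinimax l u x < c ↔ ∃ c' < c, x ∈ endComponent l {y | u y < c'} := by
  rw [endMinimax, csInf_lt_iff bddBelow_setOf_mem_endComponent (hu x)]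
  exact exists_congr fun _ ↦ and_comm

lemma mem_endComponent_of_endMinimax_lt (h : endMinimax l u x < c) :
    x ∈ endComponent l {y | u y < c} :=
  let ⟨_, hc', hx⟩ := hu.endMinimax_lt_iff.1 h
  endComponent_mono (fun _ hy ↦ lt_trans hy hc') hx

lemma endMinimax_comp_le {h : X → X} (hh : Continuous h) (hl : l ≤ map h l)
    (hub : ∀ x, u (h x) ≤ u x + b) (x : X) : endMinimax l u (h x) ≤ endMinimax l u x + b := by
  rw [← sub_le_iff_le_add]
  refine le_csInf (hu x) fun c hc ↦ sub_le_iff_le_add.2 (endMinimax_le_of_mem ?_)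
  exact mapsTo_endComponent hh hl (fun y (hy : u y < c) ↦
    show u (h y) < c + b by linarith [hub y]) hc

lemma abs_endMinimax_comp_sub_le (h : X ≃ₜ X) (hl : map h l = l) {a ε : ℝ}
    (hua : ∀ x, |u (h x) - u x - a| ≤ ε) (x : X) :
    |endMinimax l u (h x) - endMinimax l u x - a| ≤ ε := by
  have hl' : l ≤ map h.symm l := by
    nth_rw 2 [← hl]
    simp [map_map]
  have hfwd := hu.endMinimax_comp_le h.continuous hl.ge (b := a + ε)
    (fun x ↦ by linarith [(abs_le.1 (hua x)).2]) x
  have hbwd := hu.endMinimax_comp_le h.symm.continuous hl' (b := ε - a)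
    (fun x ↦ by
      have := (abs_le.1 (hua (h.symm x))).1
      rw [h.apply_symm_apply] at this
      linarith) (h x)
  rw [h.symm_apply_apply] at hbwd
  exact abs_le.2 ⟨by linarith, by linarith⟩

lemma isPreconnected_endMinimax_lt [l.NeBot] (c : ℝ) :
    IsPreconnected {x | endMinimax l u x < c} := by
  refine isPreconnected_of_forall_pair fun x hx y hy ↦ ?_
  obtain ⟨c', hc', hc⟩ := exists_between (max_lt (mem_ofPred.1 hx) hy)
  refine ⟨endComponent l {z | u z < c'}, fun z hz ↦ (endMinimax_le_of_mem hz).trans_lt hc,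
    ?_, ?_, isPreconnected_endComponent⟩
  · exact hu.mem_endComponent_of_endMinimax_lt ((le_max_left _ _).trans_lt hc')
  · exact hu.mem_endComponent_of_endMinimax_lt ((le_max_right _ _).trans_lt hc')

variable (huc : Continuous u)
include huc

lemma isOpen_lt_endMinimax [l.NeBot] (c : ℝ) : IsOpen {x | c < endMinimax l u x} := by
  refine isOpen_iff_mem_nhds.2 fun x hx ↦ ?_
  obtain ⟨c', hc, hc'⟩ := exists_between (show c < endMinimax l u x from hx)
  set W := endComponent l {y | u y < c'}
  have hmin (z : X) (hz : z ∈ closure W) : endMinimax l u z ≤ c' := by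
    have hW : W ∈ l := endComponent_mem (closure_nonempty_iff.1 ⟨z, hz⟩)
    exact endMinimax_le_of_forall_le (mem_of_superset hW subset_closure)
      isPreconnected_endComponent.closure hz fun y hy ↦
        closure_lt_subset_le huc continuous_const (closure_mono endComponent_subset hy)
  have hx : x ∈ (closure W)ᶜ := fun hxW ↦ (hmin x hxW).not_gt hc'
  filter_upwards [isClosed_closure.isOpen_compl.mem_nhds hx] with z hz
  by_contra! hle
  exact hz (subset_closure (hu.mem_endComponent_of_endMinimax_lt (hle.trans_lt hc)))

variable [LocallyConnectedSpace X]

lemma isOpen_endMinimax_lt (c : ℝ) : IsOpen {x | endMinimax l u x < c} := by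
  have : {x | endMinimax l u x < c} = ⋃ c' < c, endComponent l {y | u y < c'} := by
    ext x
    simp [hu.endMinimax_lt_iff]
  rw [this]
  exact isOpen_biUnion fun c' _ ↦ isOpen_endComponent (isOpen_lt huc continuous_const)

lemma continuous_endMinimax [l.NeBot] : Continuous (endMinimax l u) :=
  OrderTopology.continuous_iff.2 fun c ↦
    ⟨hu.isOpen_lt_endMinimax huc c, hu.isOpen_endMinimax_lt huc c⟩

lemma isPreconnected_lt_endMinimax [PreconnectedSpace X]
    (hpre : ∀ c, IsPreconnected {x | c < u x}) (c : ℝ) :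
    IsPreconnected {x | c < endMinimax l u x} := by
  refine isPreconnected_of_forall_pair fun x hx y hy ↦ ?_
  obtain ⟨c', hc, hc'⟩ := exists_between (lt_min (mem_ofPred.1 hx) hy)
  set D := closure {z | c' < u z}
  have hD : D ⊆ {z | c' ≤ u z} := closure_lt_subset_le continuous_const huc
  have hmem {z : X} (hz : c' < endMinimax l u z) : z ∈ (endComponent l Dᶜ)ᶜ := by
    rintro ⟨C, hCl, hC, hCD, hzC⟩
    exact hz.not_ge (endMinimax_le_of_forall_le hCl hC hzC fun y hy ↦
      not_lt.1 fun hlt ↦ hCD hy (subset_closure hlt))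
  refine ⟨(endComponent l Dᶜ)ᶜ, fun z hz ↦ ?_, hmem (hc'.trans_le (min_le_left _ _)),
    hmem (hc'.trans_le (min_le_right _ _)),
    isPreconnected_compl_endComponent_compl (hpre c').closure isClosed_closure⟩
  by_contra hle
  have hsub : {w | u w < c'} ⊆ Dᶜ := fun w hw hwD ↦ (mem_ofPred.1 (hD hwD)).not_gt hw
  exact hz (endComponent_mono hsub
    (hu.mem_endComponent_of_endMinimax_lt ((not_lt.1 hle).trans_lt hc)))

end BoundedTowards

end EndMinimax

section StripEnds

/-- The end of the strip at `x₁ = -∞`. -/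
def leftEnd : Filter Strip := comap Prod.fst atBot

/-- The end of the strip at `x₁ = +∞`. -/
def rightEnd : Filter Strip := comap Prod.fst atTop

instance : leftEnd.NeBot := atBot_neBot.comap_of_surj Prod.fst_surjective

instance : rightEnd.NeBot := atTop_neBot.comap_of_surj Prod.fst_surjective

/-- The function `u` stays within bounded distance of the first coordinate. -/
def IsBoundedFromFst (u : Strip → ℝ) : Prop := ∃ K, ∀ x, |u x - x.1| ≤ K

/-- A real function going from `-∞` at the left end to `+∞` at the right end of the strip, whose
strict sublevel and superlevel sets are connected; its level bands separate the two ends and carry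
the curves of the theorem. -/
structure IsEndSeparating (v : Strip → ℝ) : Prop where
  continuous : Continuous v
  tendsto_leftEnd : Tendsto v leftEnd atBot
  tendsto_rightEnd : Tendsto v rightEnd atTop
  isPreconnected_lt (c : ℝ) : IsPreconnected {x | v x < c}
  isPreconnected_gt (c : ℝ) : IsPreconnected {x | c < v x}

lemma IsEndSeparating.const_mul {v : Strip → ℝ} (hv : IsEndSeparating v) {c : ℝ} (hc : 0 < c) :
    IsEndSeparating fun x ↦ c * v x where
  continuous := hv.continuous.const_mul c
  tendsto_leftEnd := hv.tendsto_leftEnd.const_mul_atBot hc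
  tendsto_rightEnd := hv.tendsto_rightEnd.const_mul_atTop hc
  isPreconnected_lt d := by
    simpa only [lt_div_iff₀' hc] using hv.isPreconnected_lt (d / c)
  isPreconnected_gt d := by
    simpa only [div_lt_iff₀' hc] using hv.isPreconnected_gt (d / c)

namespace IsBoundedFromFst

variable {u : Strip → ℝ} {h : Strip ≃ₜ Strip}

lemma tendsto_leftEnd (hu : IsBoundedFromFst u) : Tendsto u leftEnd atBot := by
  obtain ⟨K, hK⟩ := hu
  exact tendsto_atBot_mono (fun x ↦ by linarith [(abs_le.1 (hK x)).2])
    (tendsto_atBot_add_const_right _ K tendsto_comap)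

lemma tendsto_rightEnd (hu : IsBoundedFromFst u) : Tendsto u rightEnd atTop := by
  obtain ⟨K, hK⟩ := hu
  exact tendsto_atTop_mono (fun x ↦ by linarith [(abs_le.1 (hK x)).1])
    (tendsto_atTop_add_const_right _ (-K) tendsto_comap)

lemma symm (hh : IsBoundedFromFst fun x ↦ (h x).1) : IsBoundedFromFst fun x ↦ (h.symm x).1 := by
  obtain ⟨K, hK⟩ := hh
  exact ⟨K, fun x ↦ by simpa [abs_sub_comm] using hK (h.symm x)⟩

lemma map_leftEnd (hh : IsBoundedFromFst fun x ↦ (h x).1) : map h leftEnd = leftEnd :=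
  map_eq_of_inverse h.symm h.self_comp_symm (tendsto_comap_iff.2 hh.tendsto_leftEnd)
    (tendsto_comap_iff.2 hh.symm.tendsto_leftEnd)

lemma map_rightEnd (hh : IsBoundedFromFst fun x ↦ (h x).1) : map h rightEnd = rightEnd :=
  map_eq_of_inverse h.symm h.self_comp_symm (tendsto_comap_iff.2 hh.tendsto_rightEnd)
    (tendsto_comap_iff.2 hh.symm.tendsto_rightEnd)

end IsBoundedFromFst

lemma abs_endMinimax_sub_le {X : Type*} [TopologicalSpace X] {l : Filter X} {u φ : X → ℝ} {K : ℝ}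
    (hl : ∀ x, {y | φ y ≤ φ x} ∈ l) (hφ : ∀ x, IsPreconnected {y | φ y ≤ φ x})
    (hu : ∀ x, |u x - φ x| ≤ K) :
    BoundedTowards l u ∧ ∀ x, |endMinimax l u x - φ x| ≤ K := by
  have hle (x y) (hy : φ y ≤ φ x) : u y ≤ φ x + K := by linarith [(abs_le.1 (hu y)).2]
  have hbdd : BoundedTowards l u := fun x ↦ ⟨φ x + K + 1, subset_endComponent (hφ x)
    (fun y hy ↦ (hle x y hy).trans_lt (lt_add_one _)) (hl x) (mem_ofPred.2 le_rfl)⟩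
  refine ⟨hbdd, fun x ↦ abs_le.2 ⟨?_, ?_⟩⟩
  · linarith [hbdd.le_endMinimax x, (abs_le.1 (hu x)).1]
  · linarith [endMinimax_le_of_forall_le (hl x) (hφ x) (mem_ofPred.2 le_rfl) (hle x)]

lemma isPreconnected_fst_preimage {s : Set ℝ} (hs : IsPreconnected s) :
    IsPreconnected (Prod.fst ⁻¹' s : Set Strip) := by
  rw [← prod_univ]
  exact hs.prod isPreconnected_univ

-- Regularizing at the left end makes the sublevel sets connected; regularizing the opposite
-- function at the right end then makes the superlevel sets connected and preserves the former
-- property.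
theorem exists_isEndSeparating {u : Strip → ℝ} (huc : Continuous u) (hu : IsBoundedFromFst u) :
    ∃ v : Strip → ℝ, IsEndSeparating v ∧ ∀ h : Strip ≃ₜ Strip, IsBoundedFromFst (fun x ↦ (h x).1) →
      ∀ a ε, (∀ x, |u (h x) - u x - a| ≤ ε) → ∀ x, |v (h x) - v x - a| ≤ ε := by
  obtain ⟨K, hK⟩ := hu
  obtain ⟨hbl, hKl⟩ := abs_endMinimax_sub_le (l := leftEnd) (φ := Prod.fst)
    (fun x ↦ preimage_mem_comap (Iic_mem_atBot x.1))
    (fun _ ↦ isPreconnected_fst_preimage isPreconnected_Iic) hK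
  set w := endMinimax leftEnd u
  have hwc : Continuous w := hbl.continuous_endMinimax huc
  obtain ⟨hbr, hKr⟩ := abs_endMinimax_sub_le (l := rightEnd) (u := -w) (φ := fun x ↦ -x.1)
    (fun x ↦ by simp only [neg_le_neg_iff]; exact preimage_mem_comap (Ici_mem_atTop x.1))
    (fun x ↦ by simp only [neg_le_neg_iff]; exact isPreconnected_fst_preimage isPreconnected_Ici)
    (fun x ↦ by rw [Pi.neg_apply, neg_sub_neg, abs_sub_comm]; exact hKl x)
  have hv : IsBoundedFromFst fun x ↦ -endMinimax rightEnd (-w) x :=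
    ⟨K, fun x ↦ by rw [← abs_neg]; convert hKr x using 2; ring⟩
  refine ⟨fun x ↦ -endMinimax rightEnd (-w) x, ⟨(hbr.continuous_endMinimax hwc.neg).neg,
    hv.tendsto_leftEnd, hv.tendsto_rightEnd, fun c ↦ ?_, fun c ↦ ?_⟩, fun h hh a ε hua x ↦ ?_⟩
  · simpa [neg_lt] using hbr.isPreconnected_lt_endMinimax hwc.neg
      (fun c ↦ by simpa [lt_neg] using hbl.isPreconnected_endMinimax_lt (-c)) (-c)
  · simpa [lt_neg] using hbr.isPreconnected_endMinimax_lt (-c)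
  · have hwa := hbl.abs_endMinimax_comp_sub_le h hh.map_leftEnd hua
    have := hbr.abs_endMinimax_comp_sub_le h hh.map_rightEnd (a := -a) (ε := ε)
      (fun x ↦ by rw [← abs_neg]; convert hwa x using 2; simp; ring) x
    rw [← abs_neg]; convert this using 2; ring

end StripEnds

section Lifts

/-- The deck transformation `(x₁, x₂) ↦ (x₁ + m, x₂)` of the covering `pA`. -/
noncomputable def deckTranslation (m : ℤ) : Strip ≃ₜ Strip :=
  (Homeomorph.addRight (m : ℝ)).prodCongr (Homeomorph.refl _)

lemma deckTranslation_apply (m : ℤ) (x : Strip) : deckTranslation m x = (x.1 + m, x.2) := rfl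

lemma deckTranslation_add (a b : ℤ) (x : Strip) :
    deckTranslation (a + b) x = deckTranslation a (deckTranslation b x) := by
  simp only [deckTranslation_apply, Int.cast_add]
  ring_nf

lemma deckTranslation_injective (x : Strip) : Function.Injective fun m ↦ deckTranslation m x :=
  fun a b hab ↦ by simpa [deckTranslation_apply] using hab

lemma pA_deckTranslation (m : ℤ) (x : Strip) : pA (deckTranslation m x) = pA x := by
  refine Prod.ext ?_ rfl
  change ((x.1 + m : ℝ) : AddCircle (1 : ℝ)) = x.1
  rw [AddCircle.coe_add, (AddCircle.coe_eq_zero_iff (1 : ℝ) (x := m)).2 ⟨m, by simp⟩, add_zero]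

lemma exists_eq_deckTranslation_of_pA_eq {x y : Strip} (h : pA x = pA y) :
    ∃ m : ℤ, x = deckTranslation m y := by
  obtain ⟨m, hm⟩ := exists_intCast_eq_sub_of_coe_eq (congrArg Prod.fst h)
  exact ⟨m, Prod.ext (by rw [deckTranslation_apply]; linarith) (congrArg (fun z ↦ z.2) h)⟩

lemma exists_forall_eq_deckTranslation_of_pA_eq {X : Type*} [TopologicalSpace X]
    [ConnectedSpace X] {g h : X → Strip} (hg : Continuous g) (hh : Continuous h)
    (hgh : ∀ t, pA (g t) = pA (h t)) : ∃ m : ℤ, ∀ t, g t = deckTranslation m (h t) := by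
  obtain ⟨t₀⟩ := (inferInstance : Nonempty X)
  obtain ⟨m, hm⟩ := exists_eq_deckTranslation_of_pA_eq (hgh t₀)
  refine ⟨m, fun t ↦ Prod.ext ?_ (congrArg (fun z ↦ z.2) (hgh t))⟩
  have hsub := sub_eq_sub_of_addCircle_coe_eq isPreconnected_univ hg.fst.continuousOn
    hh.fst.continuousOn (fun t _ ↦ congrArg Prod.fst (hgh t)) (mem_univ t) (mem_univ t₀)
  rw [hm] at hsub
  simp only [deckTranslation_apply] at hsub ⊢
  linarith

/-- The map `g` of the strip covers a map of the annulus acting as multiplication by `d` on deck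
transformations. -/
def HasDegree (g : Strip → Strip) (d : ℤ) : Prop :=
  ∀ m x, g (deckTranslation m x) = deckTranslation (d * m) (g x)

variable {f : Annulus ≃ₜ Annulus} {ft : Strip ≃ₜ Strip}

lemma IsLiftA.pA_apply (h : IsLiftA f ft) (x : Strip) : pA (ft x) = f (pA x) := congrFun h x

lemma IsLiftA.symm (h : IsLiftA f ft) : IsLiftA f.symm ft.symm := by
  funext x
  simp only [Function.comp, f.eq_symm_apply, ← h.pA_apply, ft.apply_symm_apply]

lemma IsLiftA.pA_iterate_apply (h : IsLiftA f ft) (k : ℕ) (x : Strip) :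
    pA (ft^[k] x) = f^[k] (pA x) :=
  (show Function.Semiconj pA ft f from h.pA_apply).iterate_right k x

lemma HasDegree.iterate {g : Strip → Strip} {d : ℤ} (hd : HasDegree g d) (k : ℕ) :
    HasDegree g^[k] (d ^ k) := fun m x ↦ by
  induction k with
  | zero => simp
  | succ k ih =>
    rw [Function.iterate_succ_apply', ih, hd, Function.iterate_succ_apply', pow_succ', mul_assoc]

lemma IsLiftA.exists_hasDegree (h : IsLiftA f ft) : ∃ d, HasDegree ft d := by
  choose d hd using fun m ↦ exists_forall_eq_deckTranslation_of_pA_eq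
    (g := fun x ↦ ft (deckTranslation m x)) (h := ft) (by fun_prop) (by fun_prop)
    (fun x ↦ by rw [h.pA_apply, pA_deckTranslation, h.pA_apply])
  have hadd (a b : ℤ) : d (a + b) = d a + d b :=
    deckTranslation_injective (ft 0) <| by
      simp only [deckTranslation_add, ← hd]
  refine ⟨d 1, fun m x ↦ ?_⟩
  have hmul : d m = m * d 1 := by
    simpa only [smul_eq_mul, mul_one, AddMonoidHom.mk'_apply] using
      map_zsmul (AddMonoidHom.mk' d hadd) m 1
  rw [hd, hmul, mul_comm]

lemma HasDegree.isUnit (h : IsLiftA f ft) {d : ℤ} (hd : HasDegree ft d) : IsUnit d := by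
  obtain ⟨d', hd'⟩ := h.symm.exists_hasDegree
  refine IsUnit.of_mul_eq_one_right d' (deckTranslation_injective 0 ?_)
  have hd₁ : ft.symm (deckTranslation (d * 1) (ft 0)) = deckTranslation 1 0 := by
    rw [← hd, ft.symm_apply_apply]
  simpa only [mul_one, hd' _ (ft 0), ft.symm_apply_apply] using hd₁

end Lifts

section Rotation

variable {ft : Strip ≃ₜ Strip} {r : ℝ}

-- On odd iterates, moving the starting point by `m` changes the displacement by `-2 * m`, so the
-- displacement of the `n`-th iterate can be adjusted to `n * r` up to an error less than `2`.
lemma mem_rotSet_of_hasDegree_neg_one (hd : HasDegree ft (-1)) (r : ℝ) : r ∈ rotSet ft := by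
  let n (k : ℕ) : ℕ := 2 * k + 1
  let y (k : ℕ) : ℝ := ((ft^[n k] 0).1 - n k * r) / 2
  have hn : Tendsto n atTop atTop :=
    tendsto_atTop_mono (fun k ↦ by change k ≤ 2 * k + 1; omega) tendsto_id
  refine ⟨n, fun k ↦ deckTranslation ⌊y k⌋ 0, hn, ?_⟩
  have hdisp (k : ℕ) : ((ft^[n k] (deckTranslation ⌊y k⌋ 0)).1 - (deckTranslation ⌊y k⌋ 0).1) / n k
      = r + 2 * Int.fract (y k) / n k := by
    have hnk : (n k : ℝ) ≠ 0 := by positivity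
    rw [hd.iterate, Odd.neg_one_pow ⟨k, rfl⟩, ← Int.self_sub_floor]
    simp only [deckTranslation_apply, y]
    field_simp
    push_cast
    simp only [neg_mul, one_mul, Prod.fst_zero, zero_add]
    ring
  have herr : Tendsto (fun k ↦ 2 * Int.fract (y k) / n k) atTop (𝓝 0) :=
    squeeze_zero (fun k ↦ by positivity)
      (fun k ↦ show _ ≤ (2 : ℝ) / n k by gcongr; linarith [Int.fract_lt_one (y k)])
      ((tendsto_const_div_atTop_nhds_zero_nat 2).comp hn)
  simpa only [hdisp, add_zero] using herr.const_add r

lemma IsLiftA.hasDegree_one_of_rotSet_eq_singleton {f : Annulus ≃ₜ Annulus} (h : IsLiftA f ft)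
    (hrot : rotSet ft = {r}) : HasDegree ft 1 := by
  obtain ⟨d, hd⟩ := h.exists_hasDegree
  rcases Int.isUnit_iff.1 (hd.isUnit h) with rfl | rfl
  · exact hd
  have hr : r + 1 ∈ rotSet ft := mem_rotSet_of_hasDegree_neg_one hd _
  simp [hrot] at hr

lemma exists_forall_abs_le_of_deckTranslation_invariant {φ : Strip → ℝ} (hφ : Continuous φ)
    (hinv : ∀ m x, φ (deckTranslation m x) = φ x) : ∃ C, ∀ x, |φ x| ≤ C := by
  obtain ⟨C, hC⟩ := ((isCompact_Icc (a := (0 : ℝ)) (b := 1)).prod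
    (isCompact_univ (X := unitInterval))).exists_bound_of_continuousOn hφ.continuousOn
  refine ⟨C, fun x ↦ ?_⟩
  rw [← hinv (-⌊x.1⌋) x]
  refine hC _ ⟨?_, mem_univ _⟩
  simp only [deckTranslation_apply, Int.cast_neg, ← sub_eq_add_neg, Int.self_sub_floor]
  exact ⟨Int.fract_nonneg _, (Int.fract_lt_one _).le⟩

lemma isBoundedFromFst_of_equivariant {u : Strip → ℝ} (hu : Continuous u)
    (hequiv : ∀ m x, u (deckTranslation m x) = u x + m) : IsBoundedFromFst u :=
  exists_forall_abs_le_of_deckTranslation_invariant (φ := fun x ↦ u x - x.1) (by fun_prop)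
    fun m x ↦ by rw [hequiv, deckTranslation_apply]; ring

lemma HasDegree.isBoundedFromFst {g : Strip → Strip} (hg : Continuous g) (hd : HasDegree g 1) :
    IsBoundedFromFst fun x ↦ (g x).1 :=
  isBoundedFromFst_of_equivariant (by fun_prop) fun m x ↦ by
    rw [hd, one_mul, deckTranslation_apply]

lemma abs_apply_iterate_sub_le {X : Type*} {g : X → X} {w : X → ℝ} {a ε : ℝ}
    (hw : ∀ x, |w (g x) - w x - a| ≤ ε) (k : ℕ) (x : X) :
    |w (g^[k] x) - w x - k * a| ≤ k * ε := by
  induction k with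
  | zero => simp
  | succ k ih =>
    rw [Function.iterate_succ_apply']
    have hsucc := hw (g^[k] x)
    rw [abs_le] at ih hsucc ⊢
    push_cast
    constructor <;> linarith

lemma exists_forall_abs_displacement_div_sub_le (hb : IsBoundedFromFst fun x ↦ (ft x).1)
    (hrot : rotSet ft = {r}) {ε : ℝ} (hε : 0 < ε) :
    ∃ n : ℕ, n ≠ 0 ∧ ∀ x, |((ft^[n] x).1 - x.1) / n - r| ≤ ε := by
  by_contra! hfar
  choose x hx using fun n : ℕ ↦ hfar (n + 1) n.succ_ne_zero
  obtain ⟨C, hC⟩ := hb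
  let a (n : ℕ) : ℝ := ((ft^[n + 1] (x n)).1 - (x n).1) / (n + 1 : ℕ)
  have ha (n : ℕ) : a n ∈ Icc (-C) C := by
    rw [mem_Icc, ← abs_le, abs_div, Nat.abs_cast, div_le_iff₀' (by positivity)]
    simpa using abs_apply_iterate_sub_le (w := Prod.fst) (a := 0) (by simpa using hC) (n + 1) (x n)
  obtain ⟨s, -, φ, hφ, hs⟩ := isCompact_Icc.tendsto_subseq ha
  have hmem : s ∈ rotSet ft := ⟨fun k ↦ φ k + 1, fun k ↦ x (φ k),
    tendsto_atTop_mono (fun _ ↦ Nat.le_succ _) hφ.tendsto_atTop, hs⟩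
  obtain rfl : s = r := by simpa [hrot] using hmem
  obtain ⟨k, hk⟩ := (Metric.tendsto_nhds.1 hs ε hε).exists
  exact (hx (φ k)).not_gt hk

-- The Birkhoff average of the first coordinate changes along `ft` by a mean displacement, which is
-- uniformly close to the rotation number.
lemma exists_approximate_translation_coordinate (hd : HasDegree ft 1) (hrot : rotSet ft = {r})
    {ε : ℝ} (hε : 0 < ε) :
    ∃ u : Strip → ℝ, Continuous u ∧ (∀ m x, u (deckTranslation m x) = u x + m) ∧
      ∀ x, |u (ft x) - u x - r| ≤ ε := by
  obtain ⟨n, hn, hr⟩ :=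
    exists_forall_abs_displacement_div_sub_le (hd.isBoundedFromFst ft.continuous) hrot hε
  refine ⟨birkhoffAverage ℝ ft Prod.fst n, ?_, fun m x ↦ ?_, fun x ↦ ?_⟩
  · exact (continuous_finsetSum _ fun k _ ↦ (ft.continuous.iterate k).fst).const_smul (n : ℝ)⁻¹
  · have hk (k : ℕ) : (ft^[k] (deckTranslation m x)).1 = (ft^[k] x).1 + m := by
      rw [hd.iterate, one_pow, one_mul, deckTranslation_apply]
    simp [birkhoffAverage, birkhoffSum, hk, Finset.sum_add_distrib, mul_add, hn]
  · rw [birkhoffAverage_apply_sub_birkhoffAverage, smul_eq_mul, ← div_eq_inv_mul]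
    exact hr x

theorem exists_isEndSeparating_of_rotSet_eq_singleton (hd : HasDegree ft 1)
    (hrot : rotSet ft = {r}) {ε : ℝ} (hε : 0 < ε) :
    ∃ v : Strip → ℝ, IsEndSeparating v ∧ (∀ m x, v (deckTranslation m x) = v x + m) ∧
      ∀ x, |v (ft x) - v x - r| ≤ ε := by
  obtain ⟨u, huc, hequiv, hdrift⟩ := exists_approximate_translation_coordinate hd hrot hε
  obtain ⟨v, hv, hv_drift⟩ :=
    exists_isEndSeparating huc (isBoundedFromFst_of_equivariant huc hequiv)
  refine ⟨v, hv, fun m x ↦ ?_, hv_drift ft (hd.isBoundedFromFst ft.continuous) r ε hdrift⟩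
  have hm : IsBoundedFromFst fun x ↦ (deckTranslation m x).1 :=
    ⟨|m|, fun x ↦ by simp [deckTranslation_apply]⟩
  have := hv_drift (deckTranslation m) hm m 0 (fun x ↦ by simp [hequiv]) x
  linarith [abs_nonpos_iff.1 this]

theorem exists_isEndSeparating_of_rotSet_eq_singleton_div (hd : HasDegree ft 1) {p : ℤ} {m : ℕ}
    [NeZero m] (hrot : rotSet ft = {(p / m : ℝ)}) {ε : ℝ} (hε : 0 < ε) :
    ∃ w : Strip → ℝ, IsEndSeparating w ∧ (∀ r x, w (deckTranslation r x) = w x + m * r) ∧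
      ∀ x, |w (ft x) - w x - p| ≤ ε := by
  have hm : (0 : ℝ) < m := by exact_mod_cast NeZero.pos m
  obtain ⟨v, hv, hequiv, hdrift⟩ :=
    exists_isEndSeparating_of_rotSet_eq_singleton hd hrot (div_pos hε hm)
  refine ⟨fun x ↦ m * v x, hv.const_mul hm, fun r x ↦ ?_, fun x ↦ ?_⟩
  · simp only [hequiv, mul_add]
  calc |m * v (ft x) - m * v x - p| = m * |v (ft x) - v x - p / m| := by
        rw [← abs_of_pos hm, ← abs_mul, abs_of_pos hm]
        field_simp
    _ ≤ m * (ε / m) := by gcongr; exact hdrift x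
    _ = ε := mul_div_cancel₀ _ hm.ne'

end Rotation

section LevelCurves

variable {w : Strip → ℝ} {c c₁ c₂ : ℝ} {γ : unitInterval → Strip} {x : Strip}

lemma eventually_rightEnd_forall_fst_lt (hγ : Continuous γ) :
    ∀ᶠ q in rightEnd, ∀ t, (γ t).1 < q.1 := by
  obtain ⟨K, hK⟩ := (isCompact_range hγ.fst).bddAbove
  filter_upwards [preimage_mem_comap (Ioi_mem_atTop K)] with q hq t
  exact (hK ⟨t, rfl⟩).trans_lt hq

lemma eventually_leftEnd_forall_lt_fst (hγ : Continuous γ) :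
    ∀ᶠ q in leftEnd, ∀ t, q.1 < (γ t).1 := by
  obtain ⟨K, hK⟩ := (isCompact_range hγ.fst).bddBelow
  filter_upwards [preimage_mem_comap (Iio_mem_atBot K)] with q hq t
  exact lt_of_lt_of_le hq (hK ⟨t, rfl⟩)

namespace IsEndSeparating

lemma onRightS (hw : IsEndSeparating w) (hγ : Continuous γ) (hγc : ∀ t, w (γ t) ≤ c)
    (hx : c < w x) : OnRightS γ x := by
  obtain ⟨q, hq, hqc⟩ := ((eventually_rightEnd_forall_fst_lt hγ).and
    (hw.tendsto_rightEnd.eventually_gt_atTop c)).exists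
  refine ⟨q, hq, (hw.isPreconnected_gt c).subset_connectedComponentIn hqc ?_ hx⟩
  rintro _ hy ⟨t, rfl⟩
  exact (hγc t).not_gt hy

lemma onLeftS (hw : IsEndSeparating w) (hγ : Continuous γ) (hγc : ∀ t, c ≤ w (γ t))
    (hx : w x < c) : OnLeftS γ x := by
  obtain ⟨q, hq, hqc⟩ := ((eventually_leftEnd_forall_lt_fst hγ).and
    (hw.tendsto_leftEnd.eventually_lt_atBot c)).exists
  refine ⟨q, hq, (hw.isPreconnected_lt c).subset_connectedComponentIn hqc ?_ hx⟩
  rintro _ hy ⟨t, rfl⟩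
  exact (hγc t).not_gt hy

lemma surjective_horizontal (hw : IsEndSeparating w) (y : unitInterval) :
    Function.Surjective fun s ↦ w (s, y) :=
  (hw.continuous.comp (by fun_prop)).surjective
    (hw.tendsto_rightEnd.comp (tendsto_comap_iff.2 tendsto_id))
    (hw.tendsto_leftEnd.comp (tendsto_comap_iff.2 tendsto_id))

theorem exists_joinsBoundaryS_between (hw : IsEndSeparating w) (hc : c₁ < c₂) :
    ∃ γ, JoinsBoundaryS γ ∧ ∀ t, w (γ t) ∈ Ioo c₁ c₂ := by
  have hgt : IsOpen {x | c₁ < w x} := isOpen_lt continuous_const hw.continuous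
  have hlt : IsOpen {x | w x < c₂} := isOpen_lt hw.continuous continuous_const
  have hband : IsPreconnected ({x | c₁ < w x} ∩ {x | w x < c₂}) :=
    isPreconnected_inter_of_union_eq_univ hgt hlt (hw.isPreconnected_gt c₁)
      (hw.isPreconnected_lt c₂) (eq_univ_of_forall fun x ↦ (hc.lt_or_gt (w x)).symm)
  obtain ⟨c, hc₁, hc₂⟩ := exists_between hc
  obtain ⟨a, ha⟩ := hw.surjective_horizontal 0 c
  obtain ⟨b, hb⟩ := hw.surjective_horizontal 1 c
  obtain ⟨γ, hγ, hγw⟩ := exists_joinsBoundaryS_of_isPreconnected (hgt.inter hlt) hband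
    (x := (a, 0)) (y := (b, 1)) (by simp_all) (by simp_all) rfl rfl
  exact ⟨γ, hγ, fun t ↦ hγw ⟨t, rfl⟩⟩

end IsEndSeparating

lemma JoinsBoundaryS.deckTranslation_comp (hγ : JoinsBoundaryS γ) (r : ℤ) :
    JoinsBoundaryS fun t ↦ deckTranslation r (γ t) :=
  ⟨(deckTranslation r).continuous.comp hγ.1, (deckTranslation r).injective.comp hγ.2.1, hγ.2.2⟩

end LevelCurves

section LevelFamily

/-- A family of boundary-joining curves, the `j`-th one in the band `|w - j| < 1/4`, permuted by the
deck transformations with `m` curves per fundamental domain. -/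
structure IsLevelFamily (w : Strip → ℝ) (m : ℕ) (γ : ℤ → unitInterval → Strip) : Prop where
  joins (j : ℤ) : JoinsBoundaryS (γ j)
  abs_sub_lt (j : ℤ) (t : unitInterval) : |w (γ j t) - j| < 1 / 4
  apply_add_mul (j r : ℤ) (t : unitInterval) : γ (j + m * r) t = deckTranslation r (γ j t)

theorem IsEndSeparating.exists_isLevelFamily {w : Strip → ℝ} (hw : IsEndSeparating w) {m : ℕ}
    [NeZero m] (hequiv : ∀ r x, w (deckTranslation r x) = w x + m * r) :
    ∃ γ, IsLevelFamily w m γ := by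
  have hm : (m : ℤ) ≠ 0 := by exact_mod_cast NeZero.ne m
  choose c hc hcw using fun j : ℤ ↦
    hw.exists_joinsBoundaryS_between (show (j - 1 / 4 : ℝ) < j + 1 / 4 by linarith)
  refine ⟨fun j t ↦ deckTranslation (j / m) (c (j % m) t),
    fun j ↦ (hc _).deckTranslation_comp _, fun j t ↦ ?_, fun j r t ↦ ?_⟩
  · have hj : ((j % m : ℤ) + m * (j / m : ℤ) : ℝ) = j := by
      exact_mod_cast Int.emod_add_mul_ediv j m
    rw [hequiv, abs_sub_lt_iff]
    constructor <;> linarith [(hcw (j % m) t).1, (hcw (j % m) t).2]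
  · rw [Int.add_mul_ediv_left _ _ hm, Int.add_mul_emod_self_left, add_comm, deckTranslation_add]

lemma eq_of_abs_sub_intCast_lt_half {y : ℝ} {a b : ℤ} (ha : |y - a| < 1 / 2)
    (hb : |y - b| < 1 / 2) : a = b := by
  rw [abs_sub_lt_iff] at ha hb
  have hab : (a : ℝ) < b + 1 := by linarith
  have hba : (b : ℝ) < a + 1 := by linarith
  norm_cast at hab hba
  omega

/-- The curves of the annulus covered by a family of curves of the strip indexed by `ℤ`, reindexed
by `ZMod m` through integer representatives. -/
noncomputable def annularFamily (m : ℕ) (γ : ℤ → unitInterval → Strip) (i : ZMod m) :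
    unitInterval → Annulus :=
  pA ∘ γ i.cast

lemma continuous_pA : Continuous pA :=
  ((AddCircle.continuous_mk' (1 : ℝ)).comp continuous_fst).prodMk continuous_snd

namespace IsLevelFamily

variable {w : Strip → ℝ} {m : ℕ} {γ : ℤ → unitInterval → Strip} (hγ : IsLevelFamily w m γ)
include hγ

lemma abs_sub_lt_half (j : ℤ) (t : unitInterval) : |w (γ j t) - j| < 1 / 2 :=
  (hγ.abs_sub_lt j t).trans (by norm_num)

lemma eq_of_apply_eq {a b : ℤ} {s t : unitInterval} (h : γ a s = γ b t) : a = b :=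
  eq_of_abs_sub_intCast_lt_half (hγ.abs_sub_lt_half a s) (h ▸ hγ.abs_sub_lt_half b t)

lemma exists_eq_add_mul_of_pA_eq {a b : ℤ} {s t : unitInterval} (h : pA (γ a s) = pA (γ b t)) :
    (∃ r, a = b + m * r) ∧ s = t := by
  obtain ⟨r, hr⟩ := exists_eq_deckTranslation_of_pA_eq h
  rw [← hγ.apply_add_mul] at hr
  obtain rfl := hγ.eq_of_apply_eq hr
  exact ⟨⟨r, rfl⟩, (hγ.joins _).2.1 hr⟩

lemma annularFamily_intCast (j : ℤ) : annularFamily m γ j = pA ∘ γ j := by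
  funext t
  simp only [annularFamily, Function.comp_apply, ZMod.coe_intCast]
  conv_rhs => rw [← Int.emod_add_mul_ediv j m, hγ.apply_add_mul, pA_deckTranslation]

lemma joinsBoundaryA_annularFamily (i : ZMod m) : JoinsBoundaryA (annularFamily m γ i) :=
  ⟨continuous_pA.comp (hγ.joins _).1, fun _ _ h ↦ (hγ.exists_eq_add_mul_of_pA_eq h).2,
    (hγ.joins _).2.2⟩

lemma disjoint_range_annularFamily {i j : ZMod m} (hij : i ≠ j) :
    Disjoint (range (annularFamily m γ i)) (range (annularFamily m γ j)) := by
  rw [disjoint_left]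
  rintro _ ⟨s, rfl⟩ ⟨t, h⟩
  obtain ⟨⟨r, hr⟩, -⟩ := hγ.exists_eq_add_mul_of_pA_eq h
  refine hij ?_
  simpa using (congrArg (Int.cast : ℤ → ZMod m) hr).symm

lemma exists_eq_of_isCurveLift {j : ℤ} {L : unitInterval → Strip} (hL : IsCurveLift (pA ∘ γ j) L) :
    ∃ r : ℤ, L = γ (j + m * r) := by
  obtain ⟨r, hr⟩ :=
    exists_forall_eq_deckTranslation_of_pA_eq hL.1 (hγ.joins j).1 (congrFun hL.2)
  exact ⟨r, funext fun t ↦ by rw [hr, hγ.apply_add_mul]⟩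

lemma onRightS (hw : IsEndSeparating w) {a b : ℤ} (hab : a < b) {x : Strip}
    (hx : |w x - b| < 1 / 2) : OnRightS (γ a) x := by
  have hab' : (a + 1 : ℝ) ≤ b := by exact_mod_cast hab
  exact hw.onRightS (hγ.joins a).1 (c := b - 1 / 2)
    (fun t ↦ by linarith [(abs_sub_lt_iff.1 (hγ.abs_sub_lt_half a t)).1])
    (by linarith [(abs_sub_lt_iff.1 hx).2])

lemma onLeftS (hw : IsEndSeparating w) {a b : ℤ} (hab : a < b) {x : Strip}
    (hx : |w x - a| < 1 / 2) : OnLeftS (γ b) x := by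
  have hab' : (a + 1 : ℝ) ≤ b := by exact_mod_cast hab
  exact hw.onLeftS (hγ.joins b).1 (c := a + 1 / 2)
    (fun t ↦ by linarith [(abs_sub_lt_iff.1 (hγ.abs_sub_lt_half b t)).2])
    (by linarith [(abs_sub_lt_iff.1 hx).1])

lemma lt_of_strictlyRightS (hw : IsEndSeparating w) {a b : ℤ}
    (h : StrictlyRightS (γ a) (range (γ b))) : a < b := by
  have hb := h (γ b 0) ⟨0, rfl⟩
  by_contra! hle
  rcases hle.eq_or_lt with rfl | hlt
  · obtain ⟨q, -, hq⟩ := hb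
    exact connectedComponentIn_subset _ _ hq ⟨0, rfl⟩
  · exact (hγ.joins a).not_onRightS_of_onLeftS
      (hγ.onLeftS hw hlt (hγ.abs_sub_lt_half b 0)) hb

lemma strictlyBetween (hw : IsEndSeparating w) (hm : 2 ≤ m) {J : ℤ} {L : unitInterval → Strip}
    (hL : Continuous L) (hLJ : ∀ t, |w (L t) - J| < 1 / 2) :
    StrictlyBetween (pA ∘ γ (J - 1)) (pA ∘ L) (pA ∘ γ (J + 1)) := by
  refine ⟨γ (J - 1), L, ⟨(hγ.joins _).1, rfl⟩, ⟨hL, rfl⟩, ?_, fun γt₃ hγt₃ hright ↦ ?_⟩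
  · rintro _ ⟨t, rfl⟩
    exact hγ.onRightS hw (sub_one_lt J) (hLJ t)
  · obtain ⟨r, rfl⟩ := hγ.exists_eq_of_isCurveLift hγt₃
    have hr : 0 ≤ r := by
      have := hγ.lt_of_strictlyRightS hw hright
      by_contra! hneg
      nlinarith
    rintro _ ⟨t, rfl⟩
    exact hγ.onLeftS hw (by nlinarith) (hLJ t)

lemma eq_of_isCurveLift_of_inter_nonempty {j J : ℤ} {L γ₁ γ₂ : unitInterval → Strip}
    (hLJ : ∀ t, |w (L t) - J| < 1 / 2) (h₁ : IsCurveLift (pA ∘ γ j) γ₁)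
    (h₂ : IsCurveLift (pA ∘ γ j) γ₂) (hne₁ : (range L ∩ range γ₁).Nonempty)
    (hne₂ : (range L ∩ range γ₂).Nonempty) : γ₁ = γ₂ := by
  have hJ {a : ℤ} (hne : (range L ∩ range (γ a)).Nonempty) : a = J := by
    obtain ⟨_, ⟨s, rfl⟩, t, ht⟩ := hne
    exact eq_of_abs_sub_intCast_lt_half (ht ▸ hγ.abs_sub_lt_half a t) (hLJ s)
  obtain ⟨r₁, rfl⟩ := hγ.exists_eq_of_isCurveLift h₁
  obtain ⟨r₂, rfl⟩ := hγ.exists_eq_of_isCurveLift h₂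
  rw [hJ hne₁, hJ hne₂]

lemma abs_iterate_sub_lt_half {g : Strip → Strip} {p : ℤ} {N k : ℕ}
    (hdrift : ∀ x, |w (g x) - w x - p| ≤ 1 / (4 * (N + 1))) (hk : k ≤ N) (j : ℤ)
    (t : unitInterval) : |w (g^[k] (γ j t)) - (j + k * p : ℤ)| < 1 / 2 := by
  have hkε : (k : ℝ) * (1 / (4 * (N + 1))) ≤ 1 / 4 := by
    have : (k : ℝ) ≤ N := by exact_mod_cast hk
    rw [mul_one_div, div_le_iff₀ (by positivity)]
    linarith
  have hiter := abs_le.1 ((abs_apply_iterate_sub_le hdrift k (γ j t)).trans hkε)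
  have hlevel := abs_sub_lt_iff.1 (hγ.abs_sub_lt j t)
  push_cast
  rw [abs_sub_lt_iff]
  constructor <;> linarith [hiter.1, hiter.2]

end IsLevelFamily

end LevelFamily

theorem vertical_curves_of_rational_pseudoRotation_iterates_general
    (f : Annulus ≃ₜ Annulus) (ft : Strip ≃ₜ Strip) (hlift : IsLiftA f ft) (p : ℤ) (m : ℕ)
    [NeZero m] (hrot : rotSet ft = {(p / m : ℝ)}) (N : ℕ) :
    ∃ γ : ZMod m → unitInterval → Annulus,
      (∀ i, JoinsBoundaryA (γ i)) ∧
      (∀ i j, i ≠ j → Disjoint (range (γ i)) (range (γ j))) ∧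
      ∀ (i : ZMod m) (k : ℕ), k ≤ N →
        (m ≠ 1 → StrictlyBetween (γ (i + k * p - 1)) (fun t ↦ f^[k] (γ i t))
          (γ (i + k * p + 1))) ∧
        ∀ (j : ZMod m) (L γ₁ γ₂ : unitInterval → Strip), IsCurveLift (fun t ↦ f^[k] (γ i t)) L →
          IsCurveLift (γ j) γ₁ → IsCurveLift (γ j) γ₂ → (range L ∩ range γ₁).Nonempty →
          (range L ∩ range γ₂).Nonempty → γ₁ = γ₂ := by
  have hd := hlift.hasDegree_one_of_rotSet_eq_singleton hrot
  obtain ⟨w, hw, hequiv, hdrift⟩ := exists_isEndSeparating_of_rotSet_eq_singleton_div hd hrot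
    (ε := 1 / (4 * (N + 1))) (by positivity)
  obtain ⟨γ, hγ⟩ := hw.exists_isLevelFamily hequiv
  refine ⟨annularFamily m γ, hγ.joinsBoundaryA_annularFamily,
    fun i j ↦ hγ.disjoint_range_annularFamily, fun i k hk ↦ ?_⟩
  obtain ⟨a, rfl⟩ := ZMod.intCast_surjective i
  have himage : (fun t ↦ f^[k] (annularFamily m γ a t)) = pA ∘ fun t ↦ ft^[k] (γ a t) := by
    funext t
    simp only [hγ.annularFamily_intCast, Function.comp_apply, hlift.pA_iterate_apply]
  have hcont : Continuous fun t ↦ ft^[k] (γ a t) :=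
    (ft.continuous.iterate k).comp (hγ.joins a).1
  have hnear := hγ.abs_iterate_sub_lt_half hdrift hk a
  rw [himage]
  refine ⟨fun hm ↦ ?_, fun j L γ₁ γ₂ hL h₁ h₂ ↦ ?_⟩
  · have := hγ.strictlyBetween hw (by have := NeZero.ne m; omega) hcont hnear
    simpa only [← hγ.annularFamily_intCast, Int.cast_add, Int.cast_sub, Int.cast_mul,
      Int.cast_one, Int.cast_natCast] using this
  · obtain ⟨b, rfl⟩ := ZMod.intCast_surjective j
    rw [hγ.annularFamily_intCast] at h₁ h₂
    obtain ⟨r, hr⟩ := exists_forall_eq_deckTranslation_of_pA_eq hL.1 hcont (congrFun hL.2)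
    refine hγ.eq_of_isCurveLift_of_inter_nonempty (J := a + k * p + m * r) (fun t ↦ ?_) h₁ h₂
    rw [hr, hequiv]
    convert hnear t using 2
    push_cast
    ring

/-- **Proposition.** Let `f ∈ Homeo₀(𝔸)` have a lift with rotation set `{p/q}`, where
either `q > 0`, `0 < p < q` and `p, q` are coprime, or `p = 0` and `q = 1`. Then for all
integers `n > 0` and `N > 0` there is a family `(γ'_i)_{i ∈ ℤ/nqℤ}` of pairwise disjoint
simple curves joining the two boundary components of the annulus such that, for every `i`
and every `0 ≤ k ≤ N`: if `n ≠ 1` or `q ≠ 1`, the curve `f^k(γ'_i)` lies strictly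
between `γ'_{i+knp-1}` and `γ'_{i+knp+1}`; and if `n = q = 1`, any lift of the curve
`f^k(γ'_1)` meets at most one lift of the curve `γ'_1`. -/
theorem vertical_curves_of_rational_pseudoRotation_iterates
    (f : Annulus ≃ₜ Annulus) (hf : IsotopicToId f)
    (ft : Strip ≃ₜ Strip) (hlift : IsLiftA f ft)
    (p q : ℕ) (hpq : (0 < p ∧ p < q ∧ Nat.Coprime p q) ∨ (p = 0 ∧ q = 1))
    (hrot : rotSet ft = {(p : ℝ) / (q : ℝ)})
    (n N : ℕ) (hn : 0 < n) (hN : 0 < N) :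
    ∃ γ' : ZMod (n * q) → unitInterval → Annulus,
      (∀ i, JoinsBoundaryA (γ' i)) ∧
      (∀ i j, i ≠ j → Disjoint (Set.range (γ' i)) (Set.range (γ' j))) ∧
      ∀ (i : ZMod (n * q)) (k : ℕ), k ≤ N →
        ((n ≠ 1 ∨ q ≠ 1) →
          StrictlyBetween (γ' (i + (k * n * p : ℕ) - 1)) (fun t => (⇑f)^[k] (γ' i t))
            (γ' (i + (k * n * p : ℕ) + 1))) ∧
        (n = 1 → q = 1 →
          ∀ L m₁ m₂ : unitInterval → Strip,
            IsCurveLift (fun t => (⇑f)^[k] (γ' 1 t)) L →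
            IsCurveLift (γ' 1) m₁ → IsCurveLift (γ' 1) m₂ →
            (Set.range L ∩ Set.range m₁).Nonempty →
            (Set.range L ∩ Set.range m₂).Nonempty → m₁ = m₂) := by
  have hq : 0 < q := by omega
  have : NeZero (n * q) := ⟨(Nat.mul_pos hn hq).ne'⟩
  have hrot' : rotSet ft = {(((n * p : ℕ) : ℤ) / (n * q : ℕ) : ℝ)} := by
    rw [hrot]
    push_cast
    rw [mul_div_mul_left _ _ (by positivity)]
  obtain ⟨γ, hjoins, hdisj, hiter⟩ :=
    vertical_curves_of_rational_pseudoRotation_iterates_general f ft hlift _ _ hrot' N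
  refine ⟨γ, hjoins, hdisj, fun i k hk ↦ ⟨fun hnq ↦ ?_, fun _ _ ↦ (hiter 1 k hk).2 1⟩⟩
  have hbetween := (hiter i k hk).1 (by simpa [mul_eq_one, imp_iff_not_or] using hnq)
  simpa only [Int.cast_natCast, ← Nat.cast_mul, mul_assoc] using hbetween
end

section
/- For every α ∈ ℝ/ℤ, the rotation R_α : (θ,t) ↦ (θ+α, t) of the closed annulus 𝔸 is a distortion element of the group Homeo₀(𝔸). -/
open Filter Topology Set

/-- The group of homeomorphisms of `X`, with `f * g = f ∘ g`. -/
noncomputable instance {X : Type*} [TopologicalSpace X] : Group (X ≃ₜ X) where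
  mul f g := g.trans f
  one := Homeomorph.refl X
  inv := Homeomorph.symm
  mul_assoc f g h := rfl
  one_mul f := Homeomorph.ext fun _ => rfl
  mul_one f := Homeomorph.ext fun _ => rfl
  inv_mul_cancel f := Homeomorph.ext fun x => f.symm_apply_apply x

/-- The word length of `g` with respect to `S`: the minimal number of factors in a
decomposition of `g` as a product of elements of `S ∪ S⁻¹`. -/
noncomputable def wordLength {G : Type*} [Group G] (S : Set G) (g : G) : ℕ :=
  sInf {n | ∃ l : List G, l.length = n ∧ (∀ x ∈ l, x ∈ S ∨ x⁻¹ ∈ S) ∧ l.prod = g}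

/-- `g` is a distortion element of the subgroup of `G` whose carrier is the subset `H`. -/
def IsDistortionElementIn {G : Type*} [Group G] (H : Set G) (g : G) : Prop :=
  ∃ S : Finset G, (S : Set G) ⊆ H ∧ g ∈ Subgroup.closure (S : Set G) ∧
    Tendsto (fun n : ℕ => (wordLength (S : Set G) (g ^ n) : ℝ) / n) atTop (nhds 0)

/-- The rotation `R_α : (θ, t) ↦ (θ + α, t)` of the closed annulus. -/
noncomputable def rotationA (α : AddCircle (1 : ℝ)) : Annulus ≃ₜ Annulus :=
  (Homeomorph.addLeft α).prodCongr (Homeomorph.refl unitInterval)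

/-!
By Dirichlet's theorem some power `n k ≥ (k + 1) ^ 2` of the rotation is the rotation by some `ε k`
with `|ε k| < 1 / 8`. Such a rotation is the product of two circle homeomorphisms each of which is
the identity on a fixed arc, that is, of two homeomorphisms of the line with support in a fixed
compact interval, say inside `(0, 1) ≃ ℝ`.

Let `f k` be *any* sequence of such homeomorphisms. On `(0, 1) ≃ ℝ`, `f k` is the commutator of the
translation `τ` by `1` with some `x k`, an infinite product of translates. A single homeomorphism
`u` of the line acts as `x k` on `(k, k + 1) ≃ ℝ` for every `k`, and then `f k` is the commutator of
`τ⁻ᵏ u τᵏ` with the extension of `τ` from `(0, 1)` by the identity, hence a word of length `O(k)` in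
three homeomorphisms. So the `n k`-th power of the rotation has word length `O(k)`, and Fekete's
lemma passes from this subsequence to all powers.
-/

open scoped Pointwise commutatorElement unitInterval
open Real (sigmoid sigmoid_pos sigmoid_lt_one sigmoid_strictMono sigmoid_injective)

namespace RotationDistortion

section WordLength

variable {G : Type*} [Group G] {S : Set G} {g h : G}

theorem wordLength_le_of_mem_pow {n : ℕ} (hg : g ∈ S ^ n) : wordLength S g ≤ n := by
  obtain ⟨f, rfl⟩ := Set.mem_pow.1 hg
  refine Nat.sInf_le ⟨_, List.length_ofFn, fun x hx => ?_, rfl⟩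
  obtain ⟨i, rfl⟩ := List.mem_ofFn.1 hx
  exact Or.inl (f i).2

theorem exists_list_length_eq_wordLength (hg : g ∈ Subgroup.closure S) :
    ∃ l : List G, l.length = wordLength S g ∧ (∀ x ∈ l, x ∈ S ∨ x⁻¹ ∈ S) ∧ l.prod = g := by
  rw [← Subgroup.mem_toSubmonoid, Subgroup.closure_toSubmonoid] at hg
  obtain ⟨l, hl, hlg⟩ := Submonoid.exists_list_of_mem_closure hg
  exact Nat.sInf_mem (s := {n | ∃ l : List G, l.length = n ∧ _ ∧ _}) ⟨l.length, l, rfl, hl, hlg⟩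

theorem wordLength_mul_le (hg : g ∈ Subgroup.closure S) (hh : h ∈ Subgroup.closure S) :
    wordLength S (g * h) ≤ wordLength S g + wordLength S h := by
  obtain ⟨l, hl, hlS, rfl⟩ := exists_list_length_eq_wordLength hg
  obtain ⟨l', hl', hlS', rfl⟩ := exists_list_length_eq_wordLength hh
  refine Nat.sInf_le ⟨l ++ l', by rw [List.length_append, hl, hl'], fun x hx => ?_,
    List.prod_append⟩
  exact (List.mem_append.1 hx).elim (hlS x) (hlS' x)

theorem subadditive_wordLength_pow (hg : g ∈ Subgroup.closure S) :
    Subadditive fun n : ℕ => (wordLength S (g ^ n) : ℝ) := fun m n => by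
  simp only [pow_add]
  exact_mod_cast wordLength_mul_le (pow_mem hg m) (pow_mem hg n)

theorem tendsto_wordLength_pow_div (hg : g ∈ Subgroup.closure S)
    (hε : ∀ ε > 0, ∃ n : ℕ, n ≠ 0 ∧ (wordLength S (g ^ n) : ℝ) / n ≤ ε) :
    Tendsto (fun n : ℕ => (wordLength S (g ^ n) : ℝ) / n) atTop (𝓝 0) := by
  have hsub := subadditive_wordLength_pow hg
  have hbdd : BddBelow (range fun n : ℕ => (wordLength S (g ^ n) : ℝ) / n) :=
    ⟨0, forall_mem_range.2 fun n => by positivity⟩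
  have hlim := hsub.tendsto_lim hbdd
  have hlim_nonneg : 0 ≤ hsub.lim := ge_of_tendsto' hlim fun n => by positivity
  have hlim_nonpos : hsub.lim ≤ 0 := le_of_forall_pos_le_add fun ε hε0 => by
    obtain ⟨n, hn, hnε⟩ := hε ε hε0
    simpa using (hsub.lim_le_div hbdd hn).trans hnε
  rwa [hlim_nonpos.antisymm hlim_nonneg] at hlim

theorem isDistortionElementIn_of_pow_mem_pow {H : Set G} (hS : S.Finite) (hSH : S ⊆ H)
    (hg : g ∈ S) {C : ℕ} {n : ℕ → ℕ} (hn : ∀ k, (k + 1) ^ 2 ≤ n k)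
    (hgn : ∀ k, g ^ n k ∈ S ^ (C * (k + 1))) : IsDistortionElementIn H g := by
  refine ⟨hS.toFinset, ?_, ?_, ?_⟩ <;> rw [hS.coe_toFinset]
  · exact hSH
  · exact Subgroup.subset_closure hg
  refine tendsto_wordLength_pow_div (Subgroup.subset_closure hg) fun ε hε => ?_
  obtain ⟨k, hk⟩ := exists_nat_gt (C / ε)
  have hn_pos : 0 < n k := (by positivity : 0 < (k + 1) ^ 2).trans_le (hn k)
  refine ⟨n k, hn_pos.ne', ?_⟩
  calc (wordLength S (g ^ n k) : ℝ) / n k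
      ≤ (C * (k + 1) : ℕ) / ((k + 1) ^ 2 : ℕ) := by
        gcongr
        · exact wordLength_le_of_mem_pow (hgn k)
        · exact hn k
    _ = C / (k + 1) := by push_cast; field_simp
    _ ≤ ε := by
        rw [div_lt_iff₀ hε] at hk
        rw [div_le_iff₀ (by positivity)]
        linarith

end WordLength

section LinearSequences

variable {G : Type*} [Group G]

/-- The sequences in `G` whose `k`-th term is a product of `O(k)` elements of some finite set that
does not depend on `k`. Bounding the number of factors by `C * (k + 1)` makes room for the constant
sequences. -/
def linearSequences (G : Type*) [Group G] : Subgroup (ℕ → G) where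
  carrier := {g | ∃ S : Set G, S.Finite ∧ ∃ C : ℕ, ∀ k, g k ∈ S ^ (C * (k + 1))}
  mul_mem' := by
    rintro g h ⟨S, hS, C, hg⟩ ⟨T, hT, D, hh⟩
    refine ⟨S ∪ T, hS.union hT, C + D, fun k => ?_⟩
    rw [add_mul, pow_add]
    exact Set.mul_mem_mul (Set.pow_subset_pow_left subset_union_left (hg k))
      (Set.pow_subset_pow_left subset_union_right (hh k))
  one_mem' := ⟨∅, finite_empty, 0, fun k => by simp⟩
  inv_mem' := by
    rintro g ⟨S, hS, C, hg⟩
    refine ⟨S⁻¹, hS.inv, C, fun k => ?_⟩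
    rw [inv_pow]
    exact Set.inv_mem_inv.2 (hg k)

theorem pow_mem_linearSequences (g : G) : (fun k => g ^ k) ∈ linearSequences G := by
  refine ⟨{1, g}, by simp, 1, fun k => ?_⟩
  exact Set.pow_subset_pow_right (by simp) (by lia) (Set.pow_mem_pow (n := k) (by simp))

theorem const_mem_linearSequences (g : G) : (fun _ => g) ∈ linearSequences G := by
  refine ⟨{1, g}, by simp, 1, fun k => ?_⟩
  exact Set.subset_pow (by simp) (by lia) (by simp)

theorem map_mem_linearSequences {G' : Type*} [Group G'] (φ : G →* G') {g : ℕ → G}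
    (hg : g ∈ linearSequences G) : (fun k => φ (g k)) ∈ linearSequences G' := by
  obtain ⟨S, hS, C, hg⟩ := hg
  exact ⟨φ '' S, hS.image φ, C, fun k => Set.image_pow φ S _ ▸ mem_image_of_mem φ (hg k)⟩

theorem isDistortionElementIn_of_map_pow_eq {G' : Type*} [Group G'] {φ : G →* G'} {H : Set G'}
    (hφ : ∀ g, φ g ∈ H) {g : G} {n : ℕ → ℕ} (hn : ∀ k, (k + 1) ^ 2 ≤ n k) {u : ℕ → G}
    (hu : u ∈ linearSequences G) (hgu : ∀ k, φ (g ^ n k) = φ (u k)) :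
    IsDistortionElementIn H (φ g) := by
  obtain ⟨S, hS, C, hSu⟩ := hu
  have hpow (k : ℕ) : φ g ^ n k ∈ (φ '' insert g S) ^ (C * (k + 1)) := by
    rw [← map_pow, hgu, ← Set.image_pow]
    exact mem_image_of_mem φ (Set.pow_subset_pow_left (subset_insert g S) (hSu k))
  exact isDistortionElementIn_of_pow_mem_pow ((hS.insert g).image φ)
    (image_subset_iff.2 fun x _ => hφ x) (mem_image_of_mem φ (mem_insert g S)) hn hpow

end LinearSequences

section Glue

theorem exists_sigmoid_eq {y : ℝ} (hy : y ∈ Ioo (0 : ℝ) 1) : ∃ t, sigmoid t = y := by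
  rwa [← Real.range_sigmoid] at hy

theorem floor_intCast_add_sigmoid (n : ℤ) (t : ℝ) : ⌊(n : ℝ) + sigmoid t⌋ = n := by
  rw [Int.floor_intCast_add, Int.floor_eq_zero_iff.2 ⟨(sigmoid_pos t).le, sigmoid_lt_one t⟩,
    add_zero]

theorem fract_intCast_add_sigmoid (n : ℤ) (t : ℝ) :
    Int.fract ((n : ℝ) + sigmoid t) = sigmoid t := by
  rw [Int.fract, floor_intCast_add_sigmoid, add_sub_cancel_left]

theorem eq_intCast_or_eq_intCast_add_sigmoid (x : ℝ) :
    ∃ n : ℤ, x = n ∨ ∃ t, x = n + sigmoid t := by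
  refine ⟨⌊x⌋, ?_⟩
  rcases (Int.fract_nonneg x).eq_or_lt with hx | hx
  · exact Or.inl (by rw [← Int.self_sub_fract, ← hx, sub_zero])
  · obtain ⟨t, ht⟩ := exists_sigmoid_eq ⟨hx, Int.fract_lt_one x⟩
    exact Or.inr ⟨t, by rw [ht, Int.floor_add_fract]⟩

theorem orderIso_ext_of_cells {f g : ℝ ≃o ℝ} (hint : ∀ n : ℤ, f n = g n)
    (hcell : ∀ (n : ℤ) t, f (n + sigmoid t) = g (n + sigmoid t)) : f = g := by
  ext x
  obtain ⟨n, rfl | ⟨t, rfl⟩⟩ := eq_intCast_or_eq_intCast_add_sigmoid x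
  exacts [hint n, hcell n t]

/-- The map fixing every integer and acting on the cell `(n, n + 1)`, identified with `ℝ` through
`t ↦ n + sigmoid t`, as `w n`. -/
noncomputable def glueFun (w : ℤ → ℝ ≃o ℝ) (x : ℝ) : ℝ :=
  if Int.fract x = 0 then x else ⌊x⌋ + sigmoid (w ⌊x⌋ (Function.invFun sigmoid (Int.fract x)))

variable (v w : ℤ → ℝ ≃o ℝ)

theorem glueFun_intCast (n : ℤ) : glueFun w n = n := by
  rw [glueFun, if_pos (Int.fract_intCast n)]

theorem glueFun_intCast_add_sigmoid (n : ℤ) (t : ℝ) :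
    glueFun w (n + sigmoid t) = n + sigmoid (w n t) := by
  rw [glueFun, fract_intCast_add_sigmoid, floor_intCast_add_sigmoid, if_neg (sigmoid_pos t).ne',
    Function.leftInverse_invFun sigmoid_injective]

theorem glueFun_one (x : ℝ) : glueFun 1 x = x := by
  obtain ⟨n, rfl | ⟨t, rfl⟩⟩ := eq_intCast_or_eq_intCast_add_sigmoid x
  · exact glueFun_intCast 1 n
  · exact glueFun_intCast_add_sigmoid 1 n t

theorem glueFun_mul (x : ℝ) : glueFun (v * w) x = glueFun v (glueFun w x) := by
  obtain ⟨n, rfl | ⟨t, rfl⟩⟩ := eq_intCast_or_eq_intCast_add_sigmoid x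
  · simp only [glueFun_intCast]
  · simp only [glueFun_intCast_add_sigmoid, Pi.mul_apply, RelIso.mul_apply]

theorem floor_glueFun (x : ℝ) : ⌊glueFun w x⌋ = ⌊x⌋ := by
  obtain ⟨n, rfl | ⟨t, rfl⟩⟩ := eq_intCast_or_eq_intCast_add_sigmoid x
  · rw [glueFun_intCast]
  · rw [glueFun_intCast_add_sigmoid, floor_intCast_add_sigmoid, floor_intCast_add_sigmoid]

theorem glueFun_lt_of_floor_eq {x y : ℝ} (hxy : x < y) (hfloor : ⌊x⌋ = ⌊y⌋) :
    glueFun w x < glueFun w y := by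
  obtain ⟨n, rfl | ⟨s, rfl⟩⟩ := eq_intCast_or_eq_intCast_add_sigmoid x <;>
    obtain ⟨m, rfl | ⟨t, rfl⟩⟩ := eq_intCast_or_eq_intCast_add_sigmoid y <;>
    simp only [floor_intCast_add_sigmoid, Int.floor_intCast] at hfloor <;> subst hfloor
  · exact absurd hxy (lt_irrefl _)
  · rw [glueFun_intCast, glueFun_intCast_add_sigmoid]
    exact lt_add_of_pos_right _ (sigmoid_pos _)
  · exact absurd hxy (lt_add_of_pos_right _ (sigmoid_pos s)).not_gt
  · simpa only [glueFun_intCast_add_sigmoid, add_lt_add_iff_left, Real.sigmoid_lt_iff,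
      OrderIso.lt_iff_lt] using hxy

theorem strictMono_glueFun : StrictMono (glueFun w) := fun x y hxy => by
  rcases (Int.floor_mono hxy.le).eq_or_lt with hfloor | hfloor
  · exact glueFun_lt_of_floor_eq w hxy hfloor
  · rw [← floor_glueFun w x, ← floor_glueFun w y] at hfloor
    exact lt_of_not_ge fun hyx => hfloor.not_ge (Int.floor_mono hyx)

/-- `glueFun` as a group homomorphism: it identifies `∏ₙ Homeo₊(ℝ)` with the group of increasing
homeomorphisms of the line that fix every integer. -/
noncomputable def glue : (ℤ → ℝ ≃o ℝ) →* (ℝ ≃o ℝ) where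
  toFun w := (strictMono_glueFun w).orderIsoOfRightInverse _ (glueFun w⁻¹) fun x => by
    rw [← glueFun_mul, mul_inv_cancel, glueFun_one]
  map_one' := OrderIso.ext (funext glueFun_one)
  map_mul' v w := OrderIso.ext (funext (glueFun_mul v w))

@[simp]
theorem glue_intCast (n : ℤ) : glue w n = n := glueFun_intCast w n

@[simp]
theorem glue_intCast_add_sigmoid (n : ℤ) (t : ℝ) :
    glue w (n + sigmoid t) = n + sigmoid (w n t) := glueFun_intCast_add_sigmoid w n t

theorem glue_sigmoid (t : ℝ) : glue w (sigmoid t) = sigmoid (w 0 t) := by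
  simpa using glue_intCast_add_sigmoid w 0 t

theorem glue_injective : Function.Injective glue := fun v w hvw => by
  ext n t
  have hcell : glue v (n + sigmoid t) = glue w (n + sigmoid t) := by rw [hvw]
  simpa only [glue_intCast_add_sigmoid, add_right_inj, Real.sigmoid_inj] using hcell

theorem exists_map_cell {f : ℝ ≃o ℝ} (hf : ∀ n : ℤ, f n = n) (n : ℤ) (t : ℝ) :
    ∃ s, f (n + sigmoid t) = n + sigmoid s := by
  have hlower : f n < f (n + sigmoid t) := f.strictMono (lt_add_of_pos_right _ (sigmoid_pos t))
  have hupper : f (n + sigmoid t) < f (n + 1 : ℤ) :=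
    f.strictMono (by push_cast; linarith [sigmoid_lt_one t])
  rw [hf] at hlower hupper
  push_cast at hupper
  obtain ⟨s, hs⟩ := exists_sigmoid_eq (y := f (n + sigmoid t) - n) ⟨by linarith, by linarith⟩
  exact ⟨s, by rw [hs, add_sub_cancel]⟩

theorem exists_eq_glue {f : ℝ ≃o ℝ} (hf : ∀ n : ℤ, f n = n) : ∃ w, f = glue w := by
  choose a ha using exists_map_cell hf
  choose b hb using exists_map_cell (f := f.symm) fun n => by rw [f.symm_apply_eq, hf]
  have ha_mono (n : ℤ) : StrictMono (a n) := fun s t hst => by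
    have := f.strictMono (add_lt_add_right (sigmoid_strictMono hst) (n : ℝ))
    simpa only [ha, add_lt_add_iff_left, Real.sigmoid_lt_iff] using this
  have hab (n : ℤ) : Function.RightInverse (b n) (a n) := fun t => by
    have := f.apply_symm_apply (n + sigmoid t)
    simpa only [hb, ha, add_right_inj, Real.sigmoid_inj] using this
  refine ⟨fun n => (ha_mono n).orderIsoOfRightInverse _ (b n) (hab n), ?_⟩
  refine orderIso_ext_of_cells (fun n => ?_) fun n t => ?_
  · rw [hf, glue_intCast]
  · rw [ha, glue_intCast_add_sigmoid]
    rfl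

theorem addRight_pow (a : ℝ) (k : ℕ) : OrderIso.addRight a ^ k = OrderIso.addRight (k * a) := by
  induction k with
  | zero => ext x; simp
  | succ k ih =>
    rw [pow_succ, ih]
    ext x
    simp only [RelIso.mul_apply, OrderIso.addRight_apply]
    push_cast
    ring

theorem glue_mul_addRight (k : ℤ) :
    glue w * OrderIso.addRight (k : ℝ) = OrderIso.addRight (k : ℝ) * glue fun n => w (n + k) := by
  refine orderIso_ext_of_cells (fun n => ?_) fun n t => ?_
  · have := glue_intCast w (n + k)
    push_cast at this
    simp [this]
  · have := glue_intCast_add_sigmoid w (n + k) t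
    push_cast at this
    simp [add_right_comm, this]

theorem conj_addRight_glue (k : ℤ) :
    (OrderIso.addRight (k : ℝ))⁻¹ * glue w * OrderIso.addRight (k : ℝ) =
      glue fun n => w (n + k) := by
  rw [mul_assoc, glue_mul_addRight, inv_mul_cancel_left]

end Glue

section CompactSupport

/-- The extension to `ℝ`, by the identity outside `(0, 1)`, of a homeomorphism of `(0, 1) ≃ ℝ`. -/
noncomputable def cellExtension : (ℝ ≃o ℝ) →* (ℝ ≃o ℝ) :=
  glue.comp (MonoidHom.mulSingle (fun _ : ℤ => ℝ ≃o ℝ) 0)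

theorem cellExtension_apply (v : ℝ ≃o ℝ) : cellExtension v = glue (Pi.mulSingle 0 v) := rfl

theorem cellExtension_sigmoid (v : ℝ ≃o ℝ) (t : ℝ) :
    cellExtension v (sigmoid t) = sigmoid (v t) := by
  rw [cellExtension_apply, glue_sigmoid, Pi.mulSingle_eq_same]

theorem intCast_add_sigmoid_notMem_Ioo {n : ℤ} (hn : n ≠ 0) (t : ℝ) :
    (n + sigmoid t : ℝ) ∉ Ioo (0 : ℝ) 1 := fun h => by
  have hfloor := Int.floor_eq_zero_iff.2 (Ioo_subset_Ico_self h)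
  rw [floor_intCast_add_sigmoid] at hfloor
  exact hn hfloor

theorem exists_eq_cellExtension {f : ℝ ≃o ℝ} (hf : ∀ x ∉ Ioo (0 : ℝ) 1, f x = x) :
    ∃ v, f = cellExtension v := by
  have hint (n : ℤ) : (n : ℝ) ∉ Ioo (0 : ℝ) 1 := fun h => by
    have hlower : 0 < n := by exact_mod_cast h.1
    have hupper : n < 1 := by exact_mod_cast h.2
    lia
  obtain ⟨w, rfl⟩ := exists_eq_glue fun n => hf n (hint n)
  refine ⟨w 0, congrArg glue (funext fun n => ?_)⟩
  change w n = (Pi.mulSingle 0 (w 0) : ℤ → ℝ ≃o ℝ) n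
  rcases eq_or_ne n 0 with rfl | hn
  · rw [Pi.mulSingle_eq_same]
  · rw [Pi.mulSingle_eq_of_ne hn]
    ext t
    simpa using hf _ (intCast_add_sigmoid_notMem_Ioo hn t)

-- The infinite product `x` of the translates of `v` over the cells `n ≥ 0` differs from its own
-- translate only in the cell `(0, 1)`.
theorem exists_commutator_eq_cellExtension (v : ℝ ≃o ℝ) :
    ∃ x : ℝ ≃o ℝ, ⁅x, OrderIso.addRight (1 : ℝ)⁆ = cellExtension v := by
  let w : ℤ → ℝ ≃o ℝ := fun n => if 0 ≤ n then v else 1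
  let w' : ℤ → ℝ ≃o ℝ := fun n => if 1 ≤ n then v else 1
  have hshift : glue w' * OrderIso.addRight 1 = OrderIso.addRight 1 * glue w := by
    simpa [w, w', Int.le_add_iff_sub_le] using glue_mul_addRight w' 1
  refine ⟨glue w, ?_⟩
  calc ⁅glue w, OrderIso.addRight 1⁆
      = glue w * (OrderIso.addRight 1 * glue w * (OrderIso.addRight 1)⁻¹)⁻¹ := by
        rw [commutatorElement_def]; group
    _ = glue (w * w'⁻¹) := by rw [← hshift, mul_inv_cancel_right, map_mul, map_inv]
    _ = cellExtension v := congrArg glue (funext fun n => ?_)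
  change w n * (w' n)⁻¹ = (Pi.mulSingle 0 v : ℤ → ℝ ≃o ℝ) n
  rcases lt_trichotomy n 0 with hn | rfl | hn
  · simp [w, w', hn.not_ge, (hn.trans zero_lt_one).not_ge, hn.ne]
  · simp [w, w']
  · simp [w, w', hn.le, Order.one_le_iff_pos.2 hn, hn.ne']

-- Conjugating by the `k`-th power of the translation brings `x k` into the cell `(0, 1)`, and the
-- commutator with `cellExtension y` forgets all the other cells.
theorem exists_commutator_conj_eq_cellExtension (x : ℕ → ℝ ≃o ℝ) (y : ℝ ≃o ℝ) :
    ∃ u, ∀ k : ℕ, ⁅(OrderIso.addRight (1 : ℝ) ^ k)⁻¹ * u * OrderIso.addRight (1 : ℝ) ^ k,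
      cellExtension y⁆ = cellExtension ⁅x k, y⁆ := by
  refine ⟨glue fun n => x n.toNat, fun k => ?_⟩
  have hconj := conj_addRight_glue (fun n => x n.toNat) k
  rw [Int.cast_natCast] at hconj
  rw [addRight_pow, mul_one, hconj, cellExtension_apply, cellExtension_apply,
    ← map_commutatorElement]
  refine congrArg glue (funext fun n => ?_)
  rcases eq_or_ne n 0 with rfl | hn
  · simp [commutatorElement_def]
  · simp [commutatorElement_def, hn]

theorem cellExtension_cellExtension_mem_linearSequences (v : ℕ → ℝ ≃o ℝ) :
    (fun k => cellExtension (cellExtension (v k))) ∈ linearSequences (ℝ ≃o ℝ) := by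
  choose x hx using fun k => exists_commutator_eq_cellExtension (v k)
  obtain ⟨u, hu⟩ := exists_commutator_conj_eq_cellExtension x (OrderIso.addRight 1)
  simp only [← hx, ← hu]
  have hshift := pow_mem_linearSequences (OrderIso.addRight (1 : ℝ))
  have hconj := mul_mem (mul_mem (inv_mem hshift) (const_mem_linearSequences u)) hshift
  have hcell := const_mem_linearSequences (cellExtension (OrderIso.addRight 1))
  exact mul_mem (mul_mem (mul_mem hconj hcell) (inv_mem hconj)) (inv_mem hcell)

theorem exists_orderIso_map_eq_map_eq {p q a b : ℝ} (hpq : p < q) (hab : a < b) :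
    ∃ c : ℝ ≃o ℝ, c p = a ∧ c q = b := by
  have hslope : 0 < (b - a) / (q - p) := div_pos (sub_pos.2 hab) (sub_pos.2 hpq)
  refine ⟨(OrderIso.addRight (-p)).trans ((OrderIso.mulLeft₀ _ hslope).trans
    (OrderIso.addRight a)), ?_, ?_⟩
  · simp
  · have := (sub_pos.2 hpq).ne'
    simp only [OrderIso.trans_apply, OrderIso.addRight_apply, OrderIso.mulLeft₀_apply]
    field_simp
    ring

theorem exists_forall_eq_conj_cellExtension_cellExtension {a b : ℝ} (hab : a < b) :
    ∃ c : ℝ ≃o ℝ, ∀ f : ℝ ≃o ℝ, (∀ x ∉ Ioo a b, f x = x) →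
      ∃ v, f = c * cellExtension (cellExtension v) * c⁻¹ := by
  obtain ⟨c, hca, hcb⟩ := exists_orderIso_map_eq_map_eq (sigmoid_strictMono zero_lt_one) hab
  refine ⟨c, fun f hf => ?_⟩
  have hconj : ∀ x ∉ Ioo (sigmoid 0) (sigmoid 1), (c⁻¹ * f * c) x = x := fun x hx => by
    have hcx : f (c x) = c x := hf _ fun h => hx (by
      rwa [← hca, ← hcb, mem_Ioo, c.lt_iff_lt, c.lt_iff_lt] at h)
    rw [RelIso.mul_apply, RelIso.mul_apply, hcx, RelIso.inv_apply_self]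
  obtain ⟨u, hu⟩ := exists_eq_cellExtension (f := c⁻¹ * f * c) fun x hx =>
    hconj x fun h => hx ⟨(sigmoid_pos 0).trans h.1, h.2.trans (sigmoid_lt_one 1)⟩
  obtain ⟨v, rfl⟩ := exists_eq_cellExtension (f := u) fun t ht => by
    apply sigmoid_injective
    rw [← cellExtension_sigmoid, ← hu]
    exact hconj _ fun h => ht (by simpa only [mem_Ioo, Real.sigmoid_lt_iff] using h)
  exact ⟨v, by rw [← hu]; group⟩

theorem mem_linearSequences_of_fixing_compl_Ioo {a b : ℝ} (hab : a < b) {f : ℕ → ℝ ≃o ℝ}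
    (hf : ∀ k, ∀ x ∉ Ioo a b, f k x = x) : f ∈ linearSequences (ℝ ≃o ℝ) := by
  obtain ⟨c, hc⟩ := exists_forall_eq_conj_cellExtension_cellExtension hab
  choose v hv using fun k => hc (f k) (hf k)
  obtain rfl := funext hv
  exact mul_mem (mul_mem (const_mem_linearSequences c)
    (cellExtension_cellExtension_mem_linearSequences v)) (inv_mem (const_mem_linearSequences c))

end CompactSupport

section CircleLifts

/-- The extension of a homeomorphism of `(0, 1) ≃ ℝ` to the lift of a circle homeomorphism
fixing `0`. -/
noncomputable def periodicExtension : (ℝ ≃o ℝ) →* CircleDeg1Liftˣ := MonoidHom.toHomUnits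
  { toFun v := ⟨⟨glue fun _ => v, (glue fun _ => v).monotone⟩, fun x => by
      simpa using DFunLike.congr_fun (glue_mul_addRight (fun _ => v) 1) x⟩
    map_one' := CircleDeg1Lift.ext glueFun_one
    map_mul' v w := CircleDeg1Lift.ext (glueFun_mul (fun _ => v) fun _ => w) }

theorem coe_periodicExtension (v : ℝ ≃o ℝ) : ⇑(periodicExtension v) = glue fun _ => v := rfl

theorem exists_eq_periodicExtension {f : CircleDeg1Liftˣ} (hf : f 0 = 0) :
    ∃ v, f = periodicExtension v := by
  obtain ⟨w, hw⟩ := exists_eq_glue (f := CircleDeg1Lift.toOrderIso f) fun n => by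
    simp [CircleDeg1Lift.map_int_of_map_zero, hf]
  have hperiodic : Function.Periodic w 1 := by
    refine congrFun (glue_injective ?_)
    rw [← mul_right_inj (OrderIso.addRight ((1 : ℤ) : ℝ)), ← glue_mul_addRight, ← hw]
    ext x
    simp
  refine ⟨w 0, Units.ext (CircleDeg1Lift.ext fun x => ?_)⟩
  have hconst : w = fun _ => w 0 := funext fun n => by simpa using hperiodic.int_mul n 0
  rw [coe_periodicExtension, ← hconst, ← hw, CircleDeg1Lift.coe_toOrderIso]

theorem exists_eq_periodicExtension_fixing_compl_Ioo {f : CircleDeg1Liftˣ} {a b : ℝ}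
    (hf : ∀ x ∈ Icc (sigmoid b - 1) (sigmoid a), f x = x) :
    ∃ v, f = periodicExtension v ∧ ∀ t ∉ Ioo a b, v t = t := by
  obtain ⟨v, rfl⟩ := exists_eq_periodicExtension
    (hf 0 ⟨sub_nonpos.2 (sigmoid_lt_one b).le, (sigmoid_pos a).le⟩)
  refine ⟨v, rfl, fun t ht => sigmoid_injective ?_⟩
  rw [← glue_sigmoid fun _ => v, ← coe_periodicExtension]
  rcases le_or_gt t a with hta | hta
  · refine hf _ ⟨?_, Real.sigmoid_le hta⟩
    linarith [sigmoid_pos t, sigmoid_lt_one b]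
  · have hbt : sigmoid b ≤ sigmoid t := Real.sigmoid_le (not_lt.1 fun h => ht ⟨hta, h⟩)
    have hfix := hf (sigmoid t - 1) ⟨by linarith, by linarith [sigmoid_lt_one t, sigmoid_pos a]⟩
    have hperiodic := CircleDeg1Lift.map_add_one (periodicExtension v) (sigmoid t - 1)
    rwa [hfix, sub_add_cancel] at hperiodic

theorem mem_linearSequences_of_fixing_Icc {δ : ℝ} (hδ : 0 < δ) {f : ℕ → CircleDeg1Liftˣ}
    (hf : ∀ k, ∀ x ∈ Icc (-δ) δ, f k x = x) : f ∈ linearSequences CircleDeg1Liftˣ := by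
  obtain ⟨a, haδ, ha⟩ := ((Real.tendsto_sigmoid_atBot.eventually_le_const hδ).and
    (eventually_lt_atBot 0)).exists
  have hsub : Icc (sigmoid (-a) - 1) (sigmoid a) ⊆ Icc (-δ) δ :=
    Icc_subset_Icc (by rw [Real.sigmoid_neg]; linarith) haδ
  choose v hv hva using fun k =>
    exists_eq_periodicExtension_fixing_compl_Ioo fun x hx => hf k x (hsub hx)
  obtain rfl := funext hv
  exact map_mem_linearSequences periodicExtension
    (mem_linearSequences_of_fixing_compl_Ioo (by linarith) hva)

theorem exists_circleDeg1LiftUnit_of_strictMono {h : ℝ → ℝ} (hmono : StrictMono h)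
    (hcont : Continuous h) (hadd : ∀ x, h (x + 1) = h x + 1) :
    ∃ f : CircleDeg1Liftˣ, ∀ x, f x = h x := by
  let f : CircleDeg1Lift := ⟨⟨h, hmono.monotone⟩, hadd⟩
  have hunit : IsUnit f := CircleDeg1Lift.isUnit_iff_bijective.2
    ⟨hmono.injective, f.continuous_iff_surjective.1 hcont⟩
  exact ⟨hunit.unit, fun _ => rfl⟩

theorem strictMono_add_of_lipschitzWith {b : ℝ → ℝ} {K : NNReal} (hb : LipschitzWith K b)
    (hK : K < 1) : StrictMono fun x => x + b x := fun x y hxy => by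
  have hdist := hb.dist_le_mul x y
  rw [Real.dist_eq, Real.dist_eq, abs_sub_comm x, abs_of_pos (sub_pos.2 hxy)] at hdist
  have hK' : (K : ℝ) * (y - x) < y - x := mul_lt_of_lt_one_left (sub_pos.2 hxy) hK
  dsimp only
  linarith [le_abs_self (b x - b y)]

theorem lipschitzWith_norm_coe_unitAddCircle :
    LipschitzWith 1 fun x : ℝ => ‖(x : UnitAddCircle)‖ :=
  LipschitzWith.of_dist_le_mul fun x y => by
    rw [NNReal.coe_one, one_mul, Real.dist_eq, Real.dist_eq]
    refine (abs_norm_sub_norm_le _ _).trans ?_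
    rw [← AddCircle.coe_sub]
    exact QuotientAddGroup.norm_mk_le_norm

theorem exists_fixing_near_zero_translating_away {ε : ℝ} (hε : |ε| < 1 / 8) :
    ∃ h : CircleDeg1Liftˣ, (∀ x : ℝ, ‖(x : UnitAddCircle)‖ ≤ 1 / 8 → h x = x) ∧
      ∀ x : ℝ, 1 / 4 ≤ ‖(x : UnitAddCircle)‖ → h x = ε + x := by
  let clamp : ℝ → ℝ := fun x => max (1 / 8) (min (1 / 4) ‖(x : UnitAddCircle)‖)
  have hclamp : LipschitzWith 1 clamp :=
    (lipschitzWith_norm_coe_unitAddCircle.const_min _).const_max _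
  have hbump : LipschitzWith (‖8 * ε‖₊ * 1) fun x => 8 * ε * clamp x :=
    (lipschitzWith_smul (8 * ε)).comp hclamp
  have hslope : ‖8 * ε‖₊ * 1 < 1 := by
    rw [mul_one, ← NNReal.coe_lt_coe, coe_nnnorm, Real.norm_eq_abs, abs_mul,
      abs_of_pos (by norm_num : (0 : ℝ) < 8), NNReal.coe_one]
    linarith
  obtain ⟨h, hh⟩ := exists_circleDeg1LiftUnit_of_strictMono (h := fun x => x + 8 * ε * clamp x - ε)
    (fun x y hxy => sub_lt_sub_right (strictMono_add_of_lipschitzWith hbump hslope hxy) ε)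
    ((continuous_id.add hbump.continuous).sub continuous_const)
    (fun x => by simp only [clamp, AddCircle.coe_add_period]; ring)
  refine ⟨h, fun x hx => ?_, fun x hx => ?_⟩
  · have hmin : clamp x = 1 / 8 := max_eq_left ((min_le_right _ _).trans hx)
    rw [hh, hmin]
    ring
  · have hmax : clamp x = 1 / 4 := by
      simp only [clamp, min_eq_left hx]
      norm_num
    rw [hh, hmax]
    ring

theorem half_sub_le_norm_coe {x a : ℝ} (hx : |x - 1 / 2| ≤ a) :
    1 / 2 - a ≤ ‖(x : UnitAddCircle)‖ := by
  have hhalf : ‖((1 / 2 : ℝ) : UnitAddCircle)‖ = 1 / 2 := by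
    simpa using AddCircle.norm_half_period_eq (1 : ℝ)
  have hdist := lipschitzWith_norm_coe_unitAddCircle.dist_le_mul (1 / 2) x
  rw [Real.dist_eq, Real.dist_eq, hhalf, NNReal.coe_one, one_mul, abs_sub_comm _ x] at hdist
  linarith [le_abs_self (1 / 2 - ‖(x : UnitAddCircle)‖)]

/-- The translation `x ↦ a + x` of the line, as the lift of a circle homeomorphism. -/
noncomputable abbrev translation (a : ℝ) : CircleDeg1Liftˣ :=
  CircleDeg1Lift.translate (.ofAdd a)

theorem exists_translation_eq_mul_fixing_near_zero {ε : ℝ} (hε : |ε| < 1 / 8) :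
    ∃ g h : CircleDeg1Liftˣ, (∀ x ∈ Icc (-(1 / 8) : ℝ) (1 / 8), g x = x) ∧
      (∀ x ∈ Icc (-(1 / 8) : ℝ) (1 / 8), h x = x) ∧
      translation ε = (translation (1 / 2))⁻¹ * g * translation (1 / 2) * h := by
  obtain ⟨h, hnear, haway⟩ := exists_fixing_near_zero_translating_away hε
  refine ⟨translation (1 / 2) * (translation ε * h⁻¹) * (translation (1 / 2))⁻¹, h,
    fun x hx => ?_, fun x hx => ?_, by group⟩
  · obtain ⟨hε₁, hε₂⟩ := abs_lt.1 hε
    have hnorm := half_sub_le_norm_coe (x := x - 1 / 2 - ε + 1) (a := 1 / 4)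
      (abs_le.2 ⟨by linarith [hx.1], by linarith [hx.2]⟩)
    rw [AddCircle.coe_add_period] at hnorm
    have hinv : (h⁻¹ : CircleDeg1Liftˣ) (x - 1 / 2) = x - 1 / 2 - ε := by
      rw [← CircleDeg1Lift.units_inv_apply_apply h (x - 1 / 2 - ε), haway _ (by linarith),
        add_sub_cancel]
    simp only [Units.val_mul, CircleDeg1Lift.mul_apply, CircleDeg1Lift.translate_inv_apply,
      CircleDeg1Lift.translate_apply, neg_add_eq_sub, hinv]
    ring
  · exact hnear x (QuotientAddGroup.norm_mk_le_norm.trans (abs_le.2 hx))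

theorem translation_mem_linearSequences {ε : ℕ → ℝ} (hε : ∀ k, |ε k| < 1 / 8) :
    (fun k => translation (ε k)) ∈ linearSequences CircleDeg1Liftˣ := by
  choose g h hg hh hgh using fun k => exists_translation_eq_mul_fixing_near_zero (hε k)
  simp only [hgh]
  have hhalf := const_mem_linearSequences (translation (1 / 2))
  have hfst := mem_linearSequences_of_fixing_Icc (by norm_num) hg
  have hsnd := mem_linearSequences_of_fixing_Icc (by norm_num) hh
  exact mul_mem (mul_mem (mul_mem (inv_mem hhalf) hfst) hhalf) hsnd

end CircleLifts

section CircleHomeomorphisms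

theorem periodic_map_sub_self (f : CircleDeg1Lift) : Function.Periodic (fun x => f x - x) 1 :=
  fun x => by simp

/-- The displacement `f x - x` of a lift, as a function on the circle. -/
noncomputable def displacement (f : CircleDeg1Lift) : UnitAddCircle → ℝ :=
  (periodic_map_sub_self f).lift

theorem displacement_coe (f : CircleDeg1Lift) (x : ℝ) : displacement f x = f x - x :=
  (periodic_map_sub_self f).lift_coe x

theorem continuous_displacement (f : CircleDeg1Liftˣ) : Continuous (displacement f) :=
  Continuous.quotient_liftOn' ((CircleDeg1Lift.toOrderIso f).continuous.sub continuous_id) _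

/-- The self-map of the circle induced by a lift. -/
noncomputable def inducedCircleMap (f : CircleDeg1Lift) (θ : UnitAddCircle) : UnitAddCircle :=
  θ + (displacement f θ : ℝ)

theorem inducedCircleMap_coe (f : CircleDeg1Lift) (x : ℝ) : inducedCircleMap f x = (f x : ℝ) := by
  rw [inducedCircleMap, displacement_coe, ← AddCircle.coe_add, add_sub_cancel]

theorem inducedCircleMap_one (θ : UnitAddCircle) : inducedCircleMap 1 θ = θ := by
  induction θ using QuotientAddGroup.induction_on with
  | H x => exact inducedCircleMap_coe 1 x

theorem inducedCircleMap_mul (f g : CircleDeg1Lift) (θ : UnitAddCircle) :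
    inducedCircleMap (f * g) θ = inducedCircleMap f (inducedCircleMap g θ) := by
  induction θ using QuotientAddGroup.induction_on with
  | H x => simp only [inducedCircleMap_coe, CircleDeg1Lift.mul_apply]

theorem continuous_inducedCircleMap (f : CircleDeg1Liftˣ) : Continuous (inducedCircleMap f) :=
  continuous_id.add ((AddCircle.continuous_mk' 1).comp (continuous_displacement f))

/-- The homomorphism from invertible lifts to circle homeomorphisms. -/
noncomputable def circleHomeomorph : CircleDeg1Liftˣ →* (UnitAddCircle ≃ₜ UnitAddCircle) where
  toFun f :=
    { toFun := inducedCircleMap f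
      invFun := inducedCircleMap (f⁻¹ : CircleDeg1Liftˣ)
      left_inv θ := by rw [← inducedCircleMap_mul, Units.inv_mul, inducedCircleMap_one]
      right_inv θ := by rw [← inducedCircleMap_mul, Units.mul_inv, inducedCircleMap_one]
      continuous_toFun := continuous_inducedCircleMap f
      continuous_invFun := continuous_inducedCircleMap f⁻¹ }
  map_one' := Homeomorph.ext inducedCircleMap_one
  map_mul' f g := Homeomorph.ext (inducedCircleMap_mul f g)

theorem circleHomeomorph_translation (a : ℝ) :
    circleHomeomorph (translation a) = Homeomorph.addLeft (a : UnitAddCircle) := by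
  refine Homeomorph.ext fun θ => ?_
  induction θ using QuotientAddGroup.induction_on with
  | H x => exact inducedCircleMap_coe _ x

theorem exists_circleDeg1LiftUnit_interpolating (f : CircleDeg1Liftˣ) (s : I) :
    ∃ g : CircleDeg1Liftˣ, ∀ x, g x = x + s * (f x - x) := by
  have hmono := (CircleDeg1Lift.toOrderIso f).strictMono
  have hcont := (CircleDeg1Lift.toOrderIso f).continuous
  rw [CircleDeg1Lift.coe_toOrderIso] at hmono hcont
  refine exists_circleDeg1LiftUnit_of_strictMono (fun x y hxy => ?_) (by fun_prop) fun x => ?_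
  · have hpos : 0 < (1 - s : ℝ) * (y - x) + s * (f y - f x) :=
      convex_Ioi 0 (sub_pos.2 hxy) (sub_pos.2 (hmono hxy)) (sub_nonneg.2 s.2.2) s.2.1
        (sub_add_cancel 1 _)
    linarith
  · rw [CircleDeg1Lift.map_add_one]
    ring

theorem isotopicToId_circleHomeomorph (f : CircleDeg1Liftˣ) :
    IsotopicToId (circleHomeomorph f) := by
  choose g hg using exists_circleDeg1LiftUnit_interpolating f
  have hdisp (s : I) (θ : UnitAddCircle) : displacement (g s) θ = s * displacement f θ := by
    induction θ using QuotientAddGroup.induction_on with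
    | H x => rw [displacement_coe, displacement_coe, hg, add_sub_cancel_left]
  have hg0 : g 0 = 1 := Units.ext (CircleDeg1Lift.ext fun x => by simp [hg])
  have hg1 : g 1 = f := Units.ext (CircleDeg1Lift.ext fun x => by simp [hg])
  refine ⟨fun s => circleHomeomorph (g s), ?_, ?_, by simp only [hg1]⟩
  · change Continuous fun p : I × UnitAddCircle => p.2 + (displacement (g p.1) p.2 : UnitAddCircle)
    simp only [hdisp]
    have := continuous_displacement f
    exact continuous_snd.add ((AddCircle.continuous_mk' 1).comp (by fun_prop))
  · simp only [hg0, map_one]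
    rfl

end CircleHomeomorphisms

section Products

variable {X Y : Type*} [TopologicalSpace X] [TopologicalSpace Y]

variable (X Y) in
/-- The action of the homeomorphisms of `X` on the first factor of `X × Y`. -/
def prodReflHom : (X ≃ₜ X) →* (X × Y ≃ₜ X × Y) where
  toFun f := f.prodCongr (Homeomorph.refl Y)
  map_one' := rfl
  map_mul' _ _ := rfl

theorem isotopicToId_prodReflHom {f : X ≃ₜ X} (hf : IsotopicToId f) :
    IsotopicToId (prodReflHom X Y f) := by
  obtain ⟨F, hF, hF0, hF1⟩ := hf
  refine ⟨fun s => prodReflHom X Y (F s), ?_, congrArg (prodReflHom X Y) hF0,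
    congrArg (prodReflHom X Y) hF1⟩
  exact (hF.comp (continuous_fst.prodMk continuous_snd.fst)).prodMk continuous_snd.snd

end Products

section Rotations

theorem exists_ge_abs_mul_sub_lt (α : ℝ) {ε : ℝ} (hε : 0 < ε) (N : ℕ) :
    ∃ (n : ℕ) (m : ℤ), N ≤ n ∧ |n * α - m| < ε := by
  obtain ⟨q, hq⟩ := exists_nat_one_div_lt hε
  obtain ⟨j, hj, -, hround⟩ :=
    Real.exists_nat_abs_mul_sub_round_le (N * α) (n := q + 1) q.succ_pos
  refine ⟨j * N, round (j * (N * α)), Nat.le_mul_of_pos_left N hj, ?_⟩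
  rw [Nat.cast_mul, mul_assoc]
  refine hround.trans_lt (lt_of_le_of_lt ?_ hq)
  gcongr
  simp

theorem circleHomeomorph_translation_pow (α : ℝ) (n : ℕ) (m : ℤ) :
    circleHomeomorph (translation α ^ n) = circleHomeomorph (translation (n * α - m)) := by
  have hm : ((m : ℝ) : UnitAddCircle) = 0 := (AddCircle.coe_eq_zero_iff 1).2 ⟨m, by simp⟩
  rw [CircleDeg1Lift.translate_pow, circleHomeomorph_translation, circleHomeomorph_translation,
    AddCircle.coe_sub, hm, sub_zero]

end Rotations

end RotationDistortion

open RotationDistortion in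
theorem rotationA_isDistortionElement_general (Y : Type*) [TopologicalSpace Y]
    (α : AddCircle (1 : ℝ)) :
    IsDistortionElementIn {h : AddCircle (1 : ℝ) × Y ≃ₜ AddCircle (1 : ℝ) × Y | IsotopicToId h}
      ((Homeomorph.addLeft α).prodCongr (Homeomorph.refl Y)) := by
  obtain ⟨α, rfl⟩ := QuotientAddGroup.mk_surjective α
  choose n m hn hm using fun k : ℕ =>
    exists_ge_abs_mul_sub_lt α (ε := 1 / 8) (by norm_num) ((k + 1) ^ 2)
  let φ := (prodReflHom (AddCircle (1 : ℝ)) Y).comp circleHomeomorph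
  have hφ (f : CircleDeg1Liftˣ) : IsotopicToId (φ f) :=
    isotopicToId_prodReflHom (isotopicToId_circleHomeomorph f)
  have hrotation : φ (translation α) = (Homeomorph.addLeft _).prodCongr (Homeomorph.refl Y) :=
    congrArg (prodReflHom _ Y) (circleHomeomorph_translation α)
  have hpow (k : ℕ) : φ (translation α ^ n k) = φ (translation (n k * α - m k)) :=
    congrArg (prodReflHom _ Y) (circleHomeomorph_translation_pow α (n k) (m k))
  exact hrotation ▸ isDistortionElementIn_of_map_pow_eq hφ hn (translation_mem_linearSequences hm)
    hpow

/-- **Every rotation of the closed annulus is a distortion element of `Homeo₀(𝔸)`.** -/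
theorem rotationA_isDistortionElement (α : AddCircle (1 : ℝ)) :
    IsDistortionElementIn {h : Annulus ≃ₜ Annulus | IsotopicToId h} (rotationA α) :=
  rotationA_isDistortionElement_general unitInterval α
end
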